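/- arXiv:1504.06783 — 3 statements merged into one kernel-verified Lean document; each statement's English description precedes it below -/
import Mathlib

section
/- Let A be a Noetherian local ring which is a module-finite algebra over a Noetherian local ring R. Then A is a sequentially Cohen-Macaulay local ring if and only if A is a sequentially Cohen-Macaulay R-module. -/
open IsLocalRing

/-- The (Krull) dimension of a module: `dim_R M = dim (R / ann_R M)`;
the zero module has dimension `⊥` (i.e. `-∞`). -/
noncomputable def moduleDim (R : Type*) [CommRing R] (M : Type*) [AddCommGroup M]
    [Module R M] : WithBot ℕ∞ :=
  ringKrullDim (R ⧸ Module.annihilator R M)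

/-- `dimLe d n` means `d ≤ n` where `n : ℤ` and `d` is a dimension in `WithBot ℕ∞`
(so for `n < 0` this means `d = ⊥`, i.e. the module is zero). -/
def dimLe (d : WithBot ℕ∞) (n : ℤ) : Prop :=
  if 0 ≤ n then d ≤ ((n.toNat : ℕ∞) : WithBot ℕ∞) else d = ⊥

/-- The depth of a module over a Noetherian local ring: the supremum of lengths of
regular sequences on `M` contained in the maximal ideal. -/
noncomputable def moduleDepth (R : Type*) [CommRing R] [IsLocalRing R] (M : Type*)
    [AddCommGroup M] [Module R M] : ℕ∞ :=
  sSup {n : ℕ∞ | ∃ rs : List R, (rs.length : ℕ∞) = n ∧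
    (∀ r ∈ rs, r ∈ maximalIdeal R) ∧ RingTheory.Sequence.IsRegular M rs}

/-- A module over a Noetherian local ring is Cohen-Macaulay if it is zero or
`depth M = dim M`. -/
def IsCMModule (R : Type*) [CommRing R] [IsLocalRing R] (M : Type*) [AddCommGroup M]
    [Module R M] : Prop :=
  Nontrivial M → (moduleDepth R M : WithBot ℕ∞) = moduleDim R M

/-- A module over a (not necessarily local) commutative ring is Cohen-Macaulay if all its
localizations at primes are Cohen-Macaulay. -/
def IsCMModuleGen (R : Type*) [CommRing R] (M : Type*) [AddCommGroup M] [Module R M] : Prop :=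
  ∀ (P : Ideal R) [P.IsPrime],
    IsCMModule (Localization.AtPrime P) (LocalizedModule P.primeCompl M)

/-- `D : Fin (ℓ+1) → Submodule R M` is the dimension filtration of `M`:
`D 0 = 0`, `D ℓ = M`, the chain is strictly increasing, each `D i` (for `i ≥ 1`) is the
largest submodule of its dimension, and every nonzero submodule which is largest among
submodules of dimension at most its own dimension occurs in the chain. -/
def IsDimFiltration (R : Type*) [CommRing R] (M : Type*) [AddCommGroup M] [Module R M]
    (ℓ : ℕ) (D : Fin (ℓ + 1) → Submodule R M) : Prop :=
  D 0 = ⊥ ∧ D (Fin.last ℓ) = ⊤ ∧ StrictMono D ∧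
  (∀ i : Fin ℓ, IsGreatest
    {N : Submodule R M | moduleDim R ↥N ≤ moduleDim R ↥(D i.succ)} (D i.succ)) ∧
  (∀ N : Submodule R M, N ≠ ⊥ →
    IsGreatest {N' : Submodule R M | moduleDim R ↥N' ≤ moduleDim R ↥N} N → ∃ i, D i = N)

/-- A module over a local ring is sequentially Cohen-Macaulay if the consecutive quotients
of its dimension filtration are Cohen-Macaulay. -/
def IsSeqCM (R : Type*) [CommRing R] [IsLocalRing R] (M : Type*) [AddCommGroup M]
    [Module R M] : Prop :=
  ∃ (ℓ : ℕ) (D : Fin (ℓ + 1) → Submodule R M), IsDimFiltration R M ℓ D ∧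
    ∀ i : Fin ℓ, IsCMModule R
      (↥(D i.succ) ⧸ (D i.castSucc).comap (D i.succ).subtype)

/-- Sequentially Cohen-Macaulay over a not necessarily local ring. -/
def IsSeqCMGen (R : Type*) [CommRing R] (M : Type*) [AddCommGroup M] [Module R M] : Prop :=
  ∃ (ℓ : ℕ) (D : Fin (ℓ + 1) → Submodule R M), IsDimFiltration R M ℓ D ∧
    ∀ i : Fin ℓ, IsCMModuleGen R
      (↥(D i.succ) ⧸ (D i.castSucc).comap (D i.succ).subtype)

/-- A local ring is sequentially Cohen-Macaulay if it is so as a module over itself. -/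
def IsSeqCMRing (R : Type*) [CommRing R] [IsLocalRing R] : Prop := IsSeqCM R R

theorem exists_mem_maximalIdeal_isSMulRegular {R : Type*} [CommRing R] [IsNoetherianRing R]
    [IsLocalRing R] {M : Type*} [AddCommGroup M] [Module R M] [Module.Finite R M]
    (h : ∀ u : M, (∀ a ∈ maximalIdeal R, a • u = 0) → u = 0) :
    ∃ z ∈ maximalIdeal R, IsSMulRegular M z := by
  by_contra! hcon
  have hsub : (maximalIdeal R : Set R) ⊆ ⋃ p ∈ associatedPrimes R M, p := by
    rw [biUnion_associatedPrimes_eq_compl_regular R M]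
    exact hcon
  obtain ⟨p, hp, hle⟩ := (Ideal.subset_union_prime_finite (associatedPrimes.finite R M)
    (f := id) ⊥ ⊥ fun _ hI _ _ ↦ IsAssociatedPrime.isPrime hI).1 hsub
  obtain ⟨hprime, u, hu⟩ := isAssociatedPrime_iff.1 (AssociatedPrimes.mem_iff.1 hp)
  have hu0 : u = 0 := h u fun a ha ↦ by
    have := hle ha
    simpa [hu, Submodule.mem_colon_singleton] using this
  exact hprime.ne_top (by simp [hu, hu0])

theorem IsSMulRegular.eq_zero_of_forall_mem_smul_eq_zero {R : Type*} [CommRing R] {I : Ideal R}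
    {M : Type*} [AddCommGroup M] [Module R M] {x : R} (hx : IsSMulRegular M x) (hxI : x ∈ I)
    (u : M) (hu : ∀ a ∈ I, a • u = 0) : u = 0 :=
  hx.right_eq_zero_of_smul (hu x hxI)

/-- For two `M`-regular elements `x, r` of an ideal `I`, if no nonzero element of `M / xM` is
killed by `I`, then the same holds for `M / rM`. -/
theorem quotSMulTop_eq_zero_of_forall_mem_smul_eq_zero {R : Type*} [CommRing R] {I : Ideal R}
    {M : Type*} [AddCommGroup M] [Module R M] {x r : R} (hx : IsSMulRegular M x)
    (hr : IsSMulRegular M r) (hxI : x ∈ I)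
    (h : ∀ u : QuotSMulTop x M, (∀ a ∈ I, a • u = 0) → u = 0)
    (u : QuotSMulTop r M) (hu : ∀ a ∈ I, a • u = 0) : u = 0 := by
  obtain ⟨u, rfl⟩ := Submodule.mkQ_surjective _ u
  simp only [Submodule.mkQ_apply, ← Submodule.Quotient.mk_smul, Submodule.Quotient.mk_eq_zero,
    Submodule.mem_smul_pointwise_iff_exists, Submodule.mem_top, true_and] at hu ⊢
  obtain ⟨v, hv⟩ := hu x hxI
  have hv0 : (Submodule.Quotient.mk v : QuotSMulTop x M) = 0 := by
    refine h _ fun a ha ↦ ?_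
    obtain ⟨w, hw⟩ := hu a ha
    rw [← Submodule.Quotient.mk_smul, Submodule.Quotient.mk_eq_zero,
      Submodule.mem_smul_pointwise_iff_exists]
    refine ⟨w, trivial, hr ?_⟩
    change r • x • w = r • a • v
    rw [smul_comm r x, hw, smul_comm r a, hv, smul_comm]
  rw [Submodule.Quotient.mk_eq_zero, Submodule.mem_smul_pointwise_iff_exists] at hv0
  obtain ⟨w, -, rfl⟩ := hv0
  exact ⟨w, hx (by simpa only [smul_comm r x] using hv)⟩

open RingTheory.Sequence in
/-- Over a Noetherian local ring, any regular element extends to a regular sequence which is as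
long as a given one. -/
theorem exists_isWeaklyRegular_cons {R : Type*} [CommRing R] [IsNoetherianRing R]
    [IsLocalRing R] (n : ℕ) {M : Type*} [AddCommGroup M] [Module R M] [Module.Finite R M]
    {r : R} (hrm : r ∈ maximalIdeal R) (hr : IsSMulRegular M r) {xs : List R}
    (hlen : xs.length = n + 1) (hxm : ∀ x ∈ xs, x ∈ maximalIdeal R)
    (hx : IsWeaklyRegular M xs) :
    ∃ ys : List R, ys.length = n ∧ (∀ y ∈ ys, y ∈ maximalIdeal R) ∧
      IsWeaklyRegular M (r :: ys) := by
  induction n generalizing M r xs with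
  | zero => exact ⟨[], rfl, by simp, by simpa using hr⟩
  | succ n ih =>
    match xs, hlen with
    | x :: x' :: xs, hlen =>
    simp only [List.length_cons, Nat.add_right_cancel_iff] at hlen
    simp only [List.mem_cons, forall_eq_or_imp] at hxm
    obtain ⟨hxm, hxm', hxsm⟩ := hxm
    obtain ⟨hx, hxs⟩ := (isWeaklyRegular_cons_iff _ _ _).1 hx
    have hx' := ((isWeaklyRegular_cons_iff _ _ _).1 hxs).1
    have hsoc := hx'.eq_zero_of_forall_mem_smul_eq_zero hxm'
    obtain ⟨z, hzm, hz⟩ := exists_mem_maximalIdeal_isSMulRegular (R := R)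
      (M := M × QuotSMulTop x M × QuotSMulTop r M) fun u hu ↦ Prod.ext
        (hx.eq_zero_of_forall_mem_smul_eq_zero hxm _ fun a ha ↦ congrArg Prod.fst (hu a ha))
        (Prod.ext (hsoc _ fun a ha ↦ congrArg (fun u ↦ u.2.1) (hu a ha))
          (quotSMulTop_eq_zero_of_forall_mem_smul_eq_zero hx hr hxm hsoc _
            fun a ha ↦ congrArg (fun u ↦ u.2.2) (hu a ha)))
    have hz₁ : IsSMulRegular M z := hz.of_injective (LinearMap.inl R _ _) LinearMap.inl_injective
    have hz' : IsSMulRegular (QuotSMulTop x M × QuotSMulTop r M) z :=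
      hz.of_injective (LinearMap.inr R M _) LinearMap.inr_injective
    have hz₂ : IsSMulRegular (QuotSMulTop x M) z :=
      hz'.of_injective (LinearMap.inl R _ _) LinearMap.inl_injective
    have hz₃ : IsSMulRegular (QuotSMulTop r M) z :=
      hz'.of_injective (LinearMap.inr R (QuotSMulTop x M) _) LinearMap.inr_injective
    obtain ⟨ws, hwl, hwm, hws⟩ := ih hzm hz₂ (xs := x' :: xs) (by simpa using hlen)
      (by simpa using ⟨hxm', hxsm⟩) hxs
    have hzx : IsWeaklyRegular M (z :: x :: ws) :=
      isWeaklyRegular_of_perm_of_subset_maximalIdeal (hws.cons hx) (.swap z x ws)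
        (by simpa using ⟨hxm, hzm, hwm⟩)
    have hzr : IsWeaklyRegular M [z, r] :=
      isWeaklyRegular_of_perm_of_subset_maximalIdeal
        (rs := [r, z]) (by simpa using ⟨hr, hz₃⟩) (.swap z r []) (by simpa using ⟨hrm, hzm⟩)
    obtain ⟨vs, hvl, hvm, hvs⟩ := ih hrm (by simpa [hz₁] using hzr)
      (xs := x :: ws) (by simpa using hwl) (by simpa using ⟨hxm, hwm⟩)
      ((isWeaklyRegular_cons_iff _ _ _).1 hzx).2
    exact ⟨z :: vs, by simpa using hvl, by simpa using ⟨hzm, hvm⟩,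
      isWeaklyRegular_of_perm_of_subset_maximalIdeal (hvs.cons hz₁) (.swap r z vs)
        (by simpa using ⟨hzm, hrm, hvm⟩)⟩

theorem algebraMap_mem_maximalIdeal_of_isIntegral {R A : Type*} [CommRing R] [IsLocalRing R]
    [CommRing A] [IsLocalRing A] [Algebra R A] [Algebra.IsIntegral R A] {r : R}
    (hr : r ∈ maximalIdeal R) : algebraMap R A r ∈ maximalIdeal A := by
  have := eq_maximalIdeal
    (Ideal.isMaximal_comap_of_isIntegral_of_isMaximal (R := R) (maximalIdeal A))
  rwa [← this] at hr

theorem maximalIdeal_le_radical_map_of_isIntegral (R A : Type*) [CommRing R] [IsLocalRing R]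
    [CommRing A] [IsLocalRing A] [Algebra R A] [Algebra.IsIntegral R A] :
    maximalIdeal A ≤ ((maximalIdeal R).map (algebraMap R A)).radical := by
  rw [Ideal.radical_eq_sInf]
  refine le_sInf fun P ⟨hle, hP⟩ ↦ ?_
  have hcomap : P.comap (algebraMap R A) = maximalIdeal R :=
    ((maximalIdeal.isMaximal R).eq_of_le (Ideal.comap_ne_top _ hP.ne_top)
      (Ideal.map_le_iff_le_comap.1 hle)).symm
  have := Ideal.isMaximal_of_isIntegral_of_isMaximal_comap (R := R) P
    (hcomap ▸ maximalIdeal.isMaximal R)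
  rw [eq_maximalIdeal this]

open RingTheory.Sequence in
/-- A regular sequence of a finite local algebra can be replaced by one of the same length coming
from the base ring. -/
theorem exists_isWeaklyRegular_map_algebraMap (R : Type*) {A : Type*} [CommRing R]
    [IsNoetherianRing R] [IsLocalRing R] [CommRing A] [IsNoetherianRing A] [IsLocalRing A]
    [Algebra R A] [Module.Finite R A] (n : ℕ) {M : Type*} [AddCommGroup M] [Module A M]
    [Module.Finite A M] {xs : List A} (hlen : xs.length = n)
    (hxm : ∀ x ∈ xs, x ∈ maximalIdeal A) (hx : IsWeaklyRegular M xs) :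
    ∃ rs : List R, rs.length = n ∧ (∀ r ∈ rs, r ∈ maximalIdeal R) ∧
      IsWeaklyRegular M (rs.map (algebraMap R A)) := by
  induction n generalizing M xs with
  | zero => exact ⟨[], rfl, by simp, by simp⟩
  | succ n ih =>
    match xs, hlen with
    | x :: xs, hlen =>
    let _ : Module R M := Module.compHom M (algebraMap R A)
    have _ : IsScalarTower R A M := .of_algebraMap_smul fun _ _ ↦ rfl
    have _ : Module.Finite R M := .trans A M
    obtain ⟨k, hk⟩ := maximalIdeal_le_radical_map_of_isIntegral R A (hxm x (by simp))
    have hxk := ((isWeaklyRegular_cons_iff _ _ _).1 hx).1.pow k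
    obtain ⟨r, hrm, hr⟩ := exists_mem_maximalIdeal_isSMulRegular (R := R) (M := M) fun u hu ↦ by
      refine hxk.right_eq_zero_of_smul (?_ : x ^ k • u = 0)
      have hle : (maximalIdeal R).map (algebraMap R A) ≤ (⊥ : Submodule A M).colon {u} :=
        Ideal.map_le_iff_le_comap.2 fun a ha ↦ by
          simpa [Submodule.mem_colon_singleton] using hu a ha
      simpa [Submodule.mem_colon_singleton] using hle hk
    rw [← isSMulRegular_algebraMap_iff (A := A)] at hr
    obtain ⟨ys, hyl, hym, hys⟩ := exists_isWeaklyRegular_cons n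
      (algebraMap_mem_maximalIdeal_of_isIntegral hrm) hr hlen hxm hx
    obtain ⟨rs, hrl, hrsm, hrs⟩ := ih hyl hym ((isWeaklyRegular_cons_iff _ _ _).1 hys).2
    exact ⟨r :: rs, by simpa using hrl, by simpa using ⟨hrm, hrsm⟩, hrs.cons hr⟩

open RingTheory.Sequence in
theorem moduleDepth_eq_of_finite (R A : Type*) [CommRing R] [IsNoetherianRing R] [IsLocalRing R]
    [CommRing A] [IsNoetherianRing A] [IsLocalRing A] [Algebra R A] [Module.Finite R A]
    (M : Type*) [AddCommGroup M] [Module A M] [Module R M] [IsScalarTower R A M]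
    [Module.Finite A M] : moduleDepth R M = moduleDepth A M := by
  have _ : Module.Finite R M := .trans A M
  unfold moduleDepth
  congr 1
  ext n
  constructor
  · rintro ⟨rs, hlen, hm, hrs⟩
    have := hrs.nontrivial
    have hm' : ∀ x ∈ rs.map (algebraMap R A), x ∈ maximalIdeal A := by
      simpa using fun r hr ↦ algebraMap_mem_maximalIdeal_of_isIntegral (hm r hr)
    exact ⟨rs.map (algebraMap R A), by simpa using hlen, hm',
      .of_isWeaklyRegular_of_mem_maximalIdeal _ hm'
        ((isWeaklyRegular_map_algebraMap_iff _ _ _).2 hrs.toIsWeaklyRegular)⟩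
  · rintro ⟨xs, hlen, hm, hxs⟩
    have := hxs.nontrivial
    obtain ⟨rs, hrl, hrm, hrs⟩ :=
      exists_isWeaklyRegular_map_algebraMap R _ rfl hm hxs.toIsWeaklyRegular
    exact ⟨rs, by rw [hrl, hlen], hrm, .of_isWeaklyRegular_of_mem_maximalIdeal _ hrm
      ((isWeaklyRegular_map_algebraMap_iff _ _ _).1 hrs)⟩

theorem ringKrullDim_eq_of_isIntegral_of_injective {R A : Type*} [CommRing R] [CommRing A]
    [Algebra R A] [Algebra.IsIntegral R A] (hinj : Function.Injective (algebraMap R A)) :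
    ringKrullDim A = ringKrullDim R := by
  refine le_antisymm ?_ (iSup_le fun l ↦ ?_)
  · exact Order.krullDim_le_of_strictMono (PrimeSpectrum.comap (algebraMap R A)) fun P Q h ↦
      Ideal.IsIntegral.comap_lt_comap (R := R) (A := A) (I := P.asIdeal) (J := Q.asIdeal) h
  · obtain ⟨P, -, hP, hPl⟩ := Ideal.exists_ideal_over_prime_of_isIntegral
      (S := A) l.head.asIdeal ⊥
      (by rw [← RingHom.ker_eq_comap_bot, (RingHom.injective_iff_ker_eq_bot _).1 hinj]
          exact bot_le)
    have : P.LiesOver l.head.asIdeal := ⟨hPl.symm⟩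
    obtain ⟨L, hL, -⟩ := Ideal.exists_ltSeries_of_hasGoingUp l P
    exact hL ▸ Order.LTSeries.length_le_krullDim L

theorem moduleDim_eq_of_isIntegral (R A : Type*) [CommRing R] [CommRing A] [Algebra R A]
    [Algebra.IsIntegral R A] (M : Type*) [AddCommGroup M] [Module A M] [Module R M]
    [IsScalarTower R A M] : moduleDim R M = moduleDim A M := by
  have hcomap : Module.annihilator R M = (Module.annihilator A M).comap (algebraMap R A) := by
    ext r
    simp [Module.mem_annihilator]
  unfold moduleDim
  rw [hcomap]
  exact (ringKrullDim_eq_of_isIntegral_of_injective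
    (Ideal.algebraMap_quotient_injective (I := Module.annihilator A M))).symm

theorem moduleDim_congr {R M N : Type*} [CommRing R] [AddCommGroup M] [Module R M]
    [AddCommGroup N] [Module R N] (e : M ≃ₗ[R] N) : moduleDim R M = moduleDim R N := by
  unfold moduleDim
  rw [e.annihilator_eq]

theorem moduleDepth_congr {R M N : Type*} [CommRing R] [IsLocalRing R] [AddCommGroup M]
    [Module R M] [AddCommGroup N] [Module R N] (e : M ≃ₗ[R] N) :
    moduleDepth R M = moduleDepth R N := by
  unfold moduleDepth
  simp only [e.isRegular_congr]

theorem isCMModule_congr {R M N : Type*} [CommRing R] [IsLocalRing R] [AddCommGroup M]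
    [Module R M] [AddCommGroup N] [Module R N] (e : M ≃ₗ[R] N) :
    IsCMModule R M ↔ IsCMModule R N := by
  unfold IsCMModule
  rw [moduleDim_congr e, moduleDepth_congr e, e.toEquiv.nontrivial_congr]

theorem isCMModule_iff_of_finite (R A : Type*) [CommRing R] [IsNoetherianRing R] [IsLocalRing R]
    [CommRing A] [IsNoetherianRing A] [IsLocalRing A] [Algebra R A] [Module.Finite R A]
    (M : Type*) [AddCommGroup M] [Module A M] [Module R M] [IsScalarTower R A M]
    [Module.Finite A M] : IsCMModule R M ↔ IsCMModule A M := by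
  unfold IsCMModule
  rw [moduleDim_eq_of_isIntegral R A, moduleDepth_eq_of_finite R A]

section Filtration

variable {R A M : Type*} [CommRing R] [CommRing A] [Algebra R A] [AddCommGroup M] [Module A M]
  [Module R M] [IsScalarTower R A M]

theorem moduleDim_restrictScalars [Algebra.IsIntegral R A] (N : Submodule A M) :
    moduleDim R ↥(N.restrictScalars R) = moduleDim A ↥N :=
  (moduleDim_congr ((N.restrictScalarsEquiv R A M).restrictScalars R)).trans
    (moduleDim_eq_of_isIntegral R A ↥N)

theorem moduleDim_span_coe [Algebra.IsIntegral R A] (N : Submodule R M) :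
    moduleDim A ↥(Submodule.span A (N : Set M)) = moduleDim R ↥N := by
  rw [← moduleDim_restrictScalars (R := R)]
  have hann : Module.annihilator R ↥((Submodule.span A (N : Set M)).restrictScalars R) =
      Module.annihilator R ↥N := by
    ext r
    simp only [Submodule.mem_annihilator, Submodule.restrictScalars_mem]
    refine ⟨fun h n hn ↦ h n (Submodule.subset_span hn), fun h n hn ↦ ?_⟩
    induction hn using Submodule.span_induction with
    | mem x hx => exact h x hx
    | zero => exact smul_zero r
    | add x y _ _ hx hy => rw [smul_add, hx, hy, add_zero]
    | smul a x _ hx => rw [smul_comm, hx, smul_zero]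
  unfold moduleDim
  rw [hann]

/-- The largest submodule of its dimension over the base ring is stable under the algebra. -/
theorem restrictScalars_span_eq_of_isGreatest [Algebra.IsIntegral R A] {N : Submodule R M}
    {d : WithBot ℕ∞} (hd : moduleDim R ↥N = d)
    (h : IsGreatest {N' : Submodule R M | moduleDim R ↥N' ≤ d} N) :
    (Submodule.span A (N : Set M)).restrictScalars R = N :=
  le_antisymm
    (h.2 (by rw [Set.mem_ofPred_eq, moduleDim_restrictScalars, moduleDim_span_coe, hd]))
    Submodule.subset_span

theorem isGreatest_restrictScalars_iff [Algebra.IsIntegral R A] (N : Submodule A M)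
    (d : WithBot ℕ∞) :
    IsGreatest {N' : Submodule R M | moduleDim R ↥N' ≤ d} (N.restrictScalars R) ↔
      IsGreatest {N' : Submodule A M | moduleDim A ↥N' ≤ d} N := by
  unfold IsGreatest
  simp only [Set.mem_ofPred_eq, moduleDim_restrictScalars, mem_upperBounds]
  refine and_congr_right fun _ ↦ ⟨fun h N' hN' ↦ ?_, fun h N' hN' ↦ ?_⟩
  · exact h (N'.restrictScalars R) (by rwa [moduleDim_restrictScalars])
  · exact Submodule.span_le (p := N).1
      (h (Submodule.span A (N' : Set M)) (by rwa [moduleDim_span_coe]))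

theorem isDimFiltration_restrictScalars_iff [Algebra.IsIntegral R A] {ℓ : ℕ}
    (D : Fin (ℓ + 1) → Submodule A M) :
    IsDimFiltration R M ℓ (fun i ↦ (D i).restrictScalars R) ↔ IsDimFiltration A M ℓ D := by
  unfold IsDimFiltration
  simp only [moduleDim_restrictScalars, isGreatest_restrictScalars_iff,
    Submodule.restrictScalars_eq_bot_iff, Submodule.restrictScalars_eq_top_iff]
  refine and_congr_right fun _ ↦ and_congr_right fun _ ↦
    and_congr Iff.rfl (and_congr_right fun _ ↦ ⟨fun h N hN hmax ↦ ?_, fun h N hN hmax ↦ ?_⟩)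
  · obtain ⟨i, hi⟩ := h (N.restrictScalars R)
      (by rwa [Ne, Submodule.restrictScalars_eq_bot_iff])
      (by rwa [moduleDim_restrictScalars, isGreatest_restrictScalars_iff])
    exact ⟨i, Submodule.restrictScalars_injective R A M hi⟩
  · have hst := restrictScalars_span_eq_of_isGreatest (A := A) rfl hmax
    rw [← hst] at hN hmax ⊢
    rw [moduleDim_restrictScalars, isGreatest_restrictScalars_iff] at hmax
    obtain ⟨i, hi⟩ := h _ (by rwa [Ne, Submodule.restrictScalars_eq_bot_iff] at hN) hmax
    exact ⟨i, by rw [hi]⟩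

theorem IsDimFiltration.exists_eq_restrictScalars [Algebra.IsIntegral R A] {ℓ : ℕ}
    {D : Fin (ℓ + 1) → Submodule R M} (hD : IsDimFiltration R M ℓ D) :
    ∃ D' : Fin (ℓ + 1) → Submodule A M, D = fun i ↦ (D' i).restrictScalars R := by
  refine ⟨fun i ↦ Submodule.span A (D i : Set M), funext fun i ↦ ?_⟩
  cases i using Fin.cases with
  | zero => simp [hD.1]
  | succ i => exact (restrictScalars_span_eq_of_isGreatest rfl (hD.2.2.2.1 i)).symm

end Filtration

theorem isSeqCM_iff_of_finite (R A : Type*) [CommRing R] [IsNoetherianRing R] [IsLocalRing R]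
    [CommRing A] [IsNoetherianRing A] [IsLocalRing A] [Algebra R A] [Module.Finite R A]
    (M : Type*) [AddCommGroup M] [Module A M] [Module R M] [IsScalarTower R A M]
    [Module.Finite A M] : IsSeqCM A M ↔ IsSeqCM R M := by
  have hCM (N N' : Submodule A M) :
      IsCMModule R (↥(N.restrictScalars R) ⧸
          (N'.restrictScalars R).comap (N.restrictScalars R).subtype) ↔
        IsCMModule A (↥N ⧸ N'.comap N.subtype) := by
    have e₁ := Submodule.Quotient.equiv
      ((N'.restrictScalars R).comap (N.restrictScalars R).subtype)
      ((N'.comap N.subtype).restrictScalars R : Submodule R ↥N)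
      ((N.restrictScalarsEquiv R A M).restrictScalars R) (Submodule.ext fun x ↦
        ⟨by rintro ⟨y, hy, rfl⟩; exact hy, fun hx ↦ ⟨x, hx, rfl⟩⟩)
    have e₂ := Submodule.Quotient.restrictScalarsEquiv R (N'.comap N.subtype)
    exact (isCMModule_congr (e₁.trans e₂)).trans (isCMModule_iff_of_finite R A _)
  constructor
  · rintro ⟨ℓ, D, hD, h⟩
    exact ⟨ℓ, _, (isDimFiltration_restrictScalars_iff D).2 hD, fun i ↦ (hCM _ _).2 (h i)⟩
  · rintro ⟨ℓ, D, hD, h⟩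
    obtain ⟨D, rfl⟩ := hD.exists_eq_restrictScalars (A := A)
    exact ⟨ℓ, D, (isDimFiltration_restrictScalars_iff D).1 hD, fun i ↦ (hCM _ _).1 (h i)⟩

/-- `A` is a sequentially Cohen-Macaulay local ring iff `A` is a sequentially
Cohen-Macaulay `R`-module. -/
theorem stmt7 (R : Type*) [CommRing R] [IsNoetherianRing R] [IsLocalRing R]
    (A : Type*) [CommRing A] [IsNoetherianRing A] [IsLocalRing A]
    [Algebra R A] [Module.Finite R A] :
    IsSeqCMRing A ↔ IsSeqCM R A := by
  exact isSeqCM_iff_of_finite R A A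
end

section
/- Let A be a Noetherian local ring and G a finite subgroup of Aut(A) whose order is invertible in A. If A is a sequentially Cohen-Macaulay local ring, then the invariant subring A^G is a sequentially Cohen-Macaulay local ring. -/
open IsLocalRing

/-- The invariant subring `A^G` of a subgroup `G` of ring automorphisms of `A`. -/
def fixedSubring (A : Type*) [CommRing A] (G : Subgroup (A ≃+* A)) : Subring A where
  carrier := {a : A | ∀ σ ∈ G, σ a = a}
  zero_mem' := by intro σ _; simp
  one_mem' := by intro σ _; simp
  add_mem' := by intro a b ha hb σ hσ; simp [map_add, ha σ hσ, hb σ hσ]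
  mul_mem' := by intro a b ha hb σ hσ; simp [map_mul, ha σ hσ, hb σ hσ]
  neg_mem' := by intro a ha σ hσ; simp [map_neg, ha σ hσ]


universe u

section Dimension

theorem moduleDim_eq_krullDim (R M : Type*) [CommRing R] [AddCommGroup M] [Module R M] :
    moduleDim R M =
      Order.krullDim (PrimeSpectrum.zeroLocus (Module.annihilator R M : Set R)) :=
  ringKrullDim_quotient _

theorem moduleDim_eq_supportDim (R M : Type*) [CommRing R] [AddCommGroup M] [Module R M]
    [Module.Finite R M] : moduleDim R M = Module.supportDim R M :=
  (Module.supportDim_eq_ringKrullDim_quotient_annihilator R M).symm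

theorem krullDim_zeroLocus_anti {R : Type*} [CommRing R] {I J : Ideal R} (h : I ≤ J) :
    Order.krullDim (PrimeSpectrum.zeroLocus (J : Set R)) ≤
      Order.krullDim (PrimeSpectrum.zeroLocus (I : Set R)) :=
  Order.krullDim_le_of_strictMono
    (fun p ↦ ⟨p.1, PrimeSpectrum.zeroLocus_anti_mono h p.2⟩) fun _ _ h ↦ h

theorem krullDim_zeroLocus_inf_le {R : Type*} [CommRing R] (I J : Ideal R) {d : WithBot ℕ∞}
    (hI : Order.krullDim (PrimeSpectrum.zeroLocus (I : Set R)) ≤ d)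
    (hJ : Order.krullDim (PrimeSpectrum.zeroLocus (J : Set R)) ≤ d) :
    Order.krullDim (PrimeSpectrum.zeroLocus ((I ⊓ J : Ideal R) : Set R)) ≤ d := by
  have key (K L : Ideal R) (hK : Order.krullDim (PrimeSpectrum.zeroLocus (K : Set R)) ≤ d)
      (p : LTSeries (PrimeSpectrum.zeroLocus (L : Set R))) (hp : K ≤ p.head.1.asIdeal) :
      (p.length : WithBot ℕ∞) ≤ d := by
    let q : LTSeries (PrimeSpectrum.zeroLocus (K : Set R)) :=
      { length := p.length
        toFun := fun i ↦ ⟨(p i).1, fun x hx ↦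
          (show p.head.1.asIdeal ≤ (p i).1.asIdeal from LTSeries.head_le p i) (hp hx)⟩
        step := fun i ↦ p.step i }
    exact (Order.LTSeries.length_le_krullDim q).trans hK
  refine iSup_le fun p ↦ ?_
  rcases (p.head.1.isPrime.inf_le).1 (show I ⊓ J ≤ p.head.1.asIdeal from p.head.2) with h | h
  exacts [key I _ hI p h, key J _ hJ p h]

theorem moduleDim_sup_le {R M : Type*} [CommRing R] [AddCommGroup M] [Module R M]
    (N N' : Submodule R M) {d : WithBot ℕ∞} (hN : moduleDim R N ≤ d) (hN' : moduleDim R N' ≤ d) :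
    moduleDim R ↥(N ⊔ N') ≤ d := by
  rw [moduleDim_eq_krullDim] at *
  refine (krullDim_zeroLocus_anti fun r hr ↦ ?_).trans (krullDim_zeroLocus_inf_le _ _ hN hN')
  rw [Submodule.mem_annihilator]
  obtain ⟨h, h'⟩ := hr
  intro x hx
  obtain ⟨y, hy, z, hz, rfl⟩ := Submodule.mem_sup.1 hx
  rw [smul_add, Submodule.mem_annihilator.1 h y hy, Submodule.mem_annihilator.1 h' z hz, add_zero]

theorem moduleDim_bot_le {R M : Type*} [CommRing R] [AddCommGroup M] [Module R M]
    (d : WithBot ℕ∞) : moduleDim R (⊥ : Submodule R M) ≤ d := by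
  rw [moduleDim_eq_supportDim, Module.supportDim_eq_bot_of_subsingleton]
  exact bot_le

theorem isGreatest_moduleDim_le_iff {R M : Type*} [CommRing R] [AddCommGroup M] [Module R M]
    {d : WithBot ℕ∞} {N : Submodule R M} :
    IsGreatest {N : Submodule R M | moduleDim R N ≤ d} N ↔
      moduleDim R N ≤ d ∧ ∀ N' : Submodule R M, moduleDim R N' ≤ d → N' ≤ N :=
  Iff.rfl

theorem exists_isGreatest_moduleDim_le (R M : Type*) [CommRing R] [AddCommGroup M] [Module R M]
    [IsNoetherian R M] (d : WithBot ℕ∞) :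
    ∃ N : Submodule R M, IsGreatest {N : Submodule R M | moduleDim R N ≤ d} N := by
  obtain ⟨N, hN, hmax⟩ := set_has_maximal_iff_noetherian.2 ‹IsNoetherian R M›
    {N : Submodule R M | moduleDim R N ≤ d} ⟨⊥, moduleDim_bot_le d⟩
  refine ⟨N, hN, fun N' hN' ↦ ?_⟩
  have := hmax (N ⊔ N') (moduleDim_sup_le N N' hN hN')
  exact sup_eq_left.1 (le_sup_left.eq_of_not_lt this).symm

theorem moduleDepth_le_moduleDim (R M : Type*) [CommRing R] [IsNoetherianRing R] [IsLocalRing R]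
    [AddCommGroup M] [Module R M] [Module.Finite R M] [Nontrivial M] :
    (moduleDepth R M : WithBot ℕ∞) ≤ moduleDim R M := by
  rw [moduleDim_eq_supportDim]
  obtain ⟨d, hd⟩ := WithBot.ne_bot_iff_exists.1
    (Module.supportDim_ne_bot_of_nontrivial R M)
  rw [← hd, WithBot.coe_le_coe]
  refine sSup_le ?_
  rintro _ ⟨rs, rfl, -, hrs⟩
  rw [← WithBot.coe_le_coe, hd, ← Module.supportDim_add_length_eq_supportDim_of_isRegular rs hrs]
  have := hrs.quot_ofList_smul_nontrivial ⊤
  obtain ⟨e, he⟩ := WithBot.ne_bot_iff_exists.1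
    (Module.supportDim_ne_bot_of_nontrivial R (M ⧸ Ideal.ofList rs • (⊤ : Submodule R M)))
  rw [← he]
  exact WithBot.coe_le_coe.2 (le_add_self : (rs.length : ℕ∞) ≤ e + rs.length)

variable {R A : Type*} [CommRing R] [CommRing A] [Algebra R A] [Algebra.IsIntegral R A]

theorem krullDim_zeroLocus_le_of_le_comap {I : Ideal R} {J : Ideal A}
    (h : I ≤ J.comap (algebraMap R A)) :
    Order.krullDim (PrimeSpectrum.zeroLocus (J : Set A)) ≤
      Order.krullDim (PrimeSpectrum.zeroLocus (I : Set R)) := by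
  refine Order.krullDim_le_of_strictMono
    (fun p ↦ ⟨p.1.comap (algebraMap R A), fun x hx ↦ p.2 (h hx)⟩) fun p q hpq ↦ ?_
  have hpq' : p.1.asIdeal < q.1.asIdeal := hpq
  obtain ⟨hle, x, hxq, hxp⟩ := SetLike.lt_iff_le_and_exists.1 hpq'
  exact Ideal.comap_lt_comap_of_integral_mem_sdiff hle ⟨hxq, hxp⟩ (Algebra.IsIntegral.isIntegral x)

theorem exists_ltSeries_zeroLocus_of_comap (J : Ideal A)
    (p : LTSeries (PrimeSpectrum.zeroLocus (J.comap (algebraMap R A) : Set R))) :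
    ∃ q : LTSeries (PrimeSpectrum.zeroLocus (J : Set A)), q.length = p.length ∧
      q.last.1.comap (algebraMap R A) = p.last.1 := by
  induction p using RelSeries.inductionOn' with
  | singleton x =>
    obtain ⟨Q, hJQ, hQ, hQx⟩ := Ideal.exists_ideal_over_prime_of_isIntegral
      x.1.asIdeal J x.2
    exact ⟨RelSeries.singleton _ ⟨⟨Q, hQ⟩, hJQ⟩, rfl, PrimeSpectrum.ext hQx⟩
  | snoc p x hx ih =>
    obtain ⟨q, hq, hlast⟩ := ih
    have hx' : p.last.1.asIdeal < x.1.asIdeal := hx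
    obtain ⟨Q, hJQ, hQ, hQx⟩ := Ideal.exists_ideal_over_prime_of_isIntegral
      x.1.asIdeal q.last.1.asIdeal
      ((congrArg PrimeSpectrum.asIdeal hlast).trans_le hx'.le)
    have hlt : q.last.1.asIdeal < Q := by
      refine lt_of_le_of_ne hJQ fun h ↦ hx'.ne ?_
      rw [← hlast, ← hQx, ← h]
      rfl
    refine ⟨q.snoc ⟨⟨Q, hQ⟩, le_trans (show J ≤ _ from q.last.2) hJQ⟩ hlt, ?_, ?_⟩
    · rw [RelSeries.snoc_length, hq, RelSeries.snoc_length]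
    · rw [RelSeries.last_snoc, RelSeries.last_snoc]
      exact PrimeSpectrum.ext hQx

theorem krullDim_zeroLocus_le_of_comap_le {I : Ideal R} {J : Ideal A}
    (h : J.comap (algebraMap R A) ≤ I) :
    Order.krullDim (PrimeSpectrum.zeroLocus (I : Set R)) ≤
      Order.krullDim (PrimeSpectrum.zeroLocus (J : Set A)) := by
  refine (krullDim_zeroLocus_anti h).trans (iSup_le fun p ↦ ?_)
  obtain ⟨q, hq, -⟩ := exists_ltSeries_zeroLocus_of_comap J p
  rw [← hq]
  exact Order.LTSeries.length_le_krullDim q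

theorem moduleDim_map_le (I : Ideal R) :
    moduleDim A ↥(I.map (algebraMap R A)) ≤ moduleDim R I := by
  rw [moduleDim_eq_krullDim, moduleDim_eq_krullDim]
  refine krullDim_zeroLocus_le_of_le_comap fun r hr ↦ ?_
  rw [Ideal.mem_comap, Ideal.map, Ideal.span, Submodule.mem_annihilator_span]
  rintro ⟨_, x, hx, rfl⟩
  rw [Submodule.mem_annihilator] at hr
  rw [smul_eq_mul, ← map_mul, ← smul_eq_mul, hr x hx, map_zero]

theorem moduleDim_comap_le (J : Ideal A)
    (hinj : Function.Injective (algebraMap R A)) :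
    moduleDim R ↥(J.comap (algebraMap R A)) ≤ moduleDim A J := by
  rw [moduleDim_eq_krullDim, moduleDim_eq_krullDim]
  refine krullDim_zeroLocus_le_of_comap_le fun r hr ↦ ?_
  rw [Submodule.mem_annihilator]
  intro x hx
  rw [Ideal.mem_comap, Submodule.mem_annihilator] at hr
  apply hinj
  rw [smul_eq_mul, map_mul, map_zero]
  exact hr _ hx

end Dimension

section RegularSequence

open CategoryTheory Abelian RingTheory.Sequence

theorem IsSMulRegular.of_leftInverse {R M N : Type*} [CommRing R] [AddCommGroup M] [Module R M]
    [AddCommGroup N] [Module R N] {r : R} (f : N →ₗ[R] M) (g : M →ₗ[R] N)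
    (hgf : g ∘ₗ f = LinearMap.id) (h : IsSMulRegular M r) : IsSMulRegular N r := by
  have hinj : Function.Injective f :=
    Function.LeftInverse.injective (g := g) fun x ↦ LinearMap.congr_fun hgf x
  intro x y hxy
  exact hinj (h (by simpa using congrArg f hxy))

theorem RingTheory.Sequence.IsWeaklyRegular.of_leftInverse {R M N : Type*} [CommRing R]
    [AddCommGroup M] [Module R M] [AddCommGroup N] [Module R N] {rs : List R}
    (f : N →ₗ[R] M) (g : M →ₗ[R] N) (hgf : g ∘ₗ f = LinearMap.id)
    (h : IsWeaklyRegular M rs) : IsWeaklyRegular N rs := by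
  induction rs generalizing M N with
  | nil => exact .nil R N
  | cons r rs ih =>
    rw [isWeaklyRegular_cons_iff] at h ⊢
    refine ⟨h.1.of_leftInverse f g hgf,
      ih (QuotSMulTop.map r f) (QuotSMulTop.map r g) ?_ h.2⟩
    rw [← QuotSMulTop.map_comp, hgf, QuotSMulTop.map_id]

theorem exists_algebraMap_isSMulRegular {R A : Type*} [CommRing R] [IsLocalRing R] [CommRing A]
    [IsLocalRing A] [IsNoetherianRing A] [Algebra R A] [Algebra.IsIntegral R A]
    (M : Type*) [AddCommGroup M] [Module A M] [Module.Finite A M]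
    {x : A} (hx : x ∈ maximalIdeal A) (hreg : IsSMulRegular M x) :
    ∃ r ∈ maximalIdeal R, IsSMulRegular M (algebraMap R A r) := by
  by_contra! hcon
  have hprime : ∀ P ∈ associatedPrimes A M, P ≠ ⊥ → P ≠ ⊥ →
      (P.comap (algebraMap R A)).IsPrime := fun P hP _ _ ↦
    have := hP.isPrime
    inferInstance
  obtain ⟨P, hP, hle⟩ := (Ideal.subset_union_prime_finite (associatedPrimes.finite A M)
    (f := fun P ↦ P.comap (algebraMap R A)) ⊥ ⊥ hprime (I := maximalIdeal R)).1 fun r hr ↦ by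
      have h := (biUnion_associatedPrimes_eq_compl_regular A M).symm.subset (hcon r hr)
      simpa using h
  have := hP.isPrime
  have hmax : (P.comap (algebraMap R A)).IsMaximal := by
    rw [← (maximalIdeal.isMaximal R).eq_of_le (Ideal.IsPrime.ne_top inferInstance) hle]
    infer_instance
  have hPm := IsLocalRing.eq_maximalIdeal
    (Ideal.isMaximal_of_isIntegral_of_isMaximal_comap P hmax)
  refine (biUnion_associatedPrimes_eq_compl_regular A M).subset
    (Set.mem_biUnion hP ?_) hreg
  rwa [hPm]

theorem subsingleton_ext_quotSMulTop {A : Type u} [CommRing A] (N M : ModuleCat.{u} A) {x : A}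
    (hx : IsSMulRegular M x) {n : ℕ} (h : ∀ i < n + 1, Subsingleton (Ext N M i)) :
    ∀ i < n, Subsingleton (Ext N (ModuleCat.of A (QuotSMulTop x M)) i) := by
  intro i hi
  have zero1 := AddCommGrpCat.isZero_of_iff_subsingleton.mpr (h i (by lia))
  have zero2 := AddCommGrpCat.isZero_of_iff_subsingleton.mpr (h (i + 1) (by lia))
  exact AddCommGrpCat.subsingleton_of_isZero <| ShortComplex.Exact.isZero_of_both_zeros
    ((Ext.covariant_sequence_exact₃' N hx.smulShortComplex_shortExact) i (i + 1) rfl)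
    (zero1.eq_zero_of_src _) (zero2.eq_zero_of_tgt _)

theorem exists_map_algebraMap_isWeaklyRegular {R : Type*} {A : Type u} [CommRing R]
    [IsLocalRing R] [CommRing A] [IsLocalRing A] [IsNoetherianRing A] [Algebra R A]
    [Algebra.IsIntegral R A] (n : ℕ) (M : ModuleCat.{u} A) [Module.Finite A M]
    (h : ∀ i < n, Subsingleton (Ext (ModuleCat.of A (A ⧸ maximalIdeal A)) M i)) :
    ∃ rs : List R, rs.length = n ∧ (∀ r ∈ rs, r ∈ maximalIdeal R) ∧
      IsWeaklyRegular M (rs.map (algebraMap R A)) := by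
  induction n generalizing M with
  | zero => exact ⟨[], rfl, by simp, by simp⟩
  | succ n ih =>
    have : Subsingleton (ModuleCat.of A (A ⧸ maximalIdeal A) ⟶ M) :=
      Ext.addEquiv₀.subsingleton_congr.mp (h 0 n.zero_lt_succ)
    have : Subsingleton ((A ⧸ maximalIdeal A) →ₗ[A] M) :=
      (ModuleCat.homAddEquiv (M := ModuleCat.of A (A ⧸ maximalIdeal A)) (N := M)).symm.subsingleton
    obtain ⟨x, hx, hreg⟩ := IsSMulRegular.subsingleton_linearMap_iff.mp this
    rw [Ideal.annihilator_quotient] at hx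
    obtain ⟨r, hr, hrreg⟩ := exists_algebraMap_isSMulRegular (R := R) M hx hreg
    obtain ⟨rs, hlen, hmem, hrs⟩ := ih (ModuleCat.of A (QuotSMulTop (algebraMap R A r) M))
      (subsingleton_ext_quotSMulTop _ M hrreg h)
    refine ⟨r :: rs, by simp [hlen], List.forall_mem_cons.2 ⟨hr, hmem⟩, ?_⟩
    rw [List.map_cons, isWeaklyRegular_cons_iff]
    exact ⟨hrreg, hrs⟩

/-- Over an integral extension `R → A` of local rings, an `A`-regular sequence on a finite
`A`-module can be replaced by a sequence of the same length coming from `R`. -/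
theorem exists_isWeaklyRegular_of_isRegular {R : Type*} {A : Type u} [CommRing R]
    [IsLocalRing R] [CommRing A] [IsLocalRing A] [IsNoetherianRing A] [Algebra R A]
    [Algebra.IsIntegral R A] (M : Type u) [AddCommGroup M] [Module A M] [Module R M]
    [IsScalarTower R A M] [Module.Finite A M] [Nontrivial M] {as : List A}
    (hmem : ∀ a ∈ as, a ∈ maximalIdeal A) (has : IsRegular M as) :
    ∃ rs : List R, rs.length = as.length ∧ (∀ r ∈ rs, r ∈ maximalIdeal R) ∧
      IsWeaklyRegular M rs := by
  have hlt : maximalIdeal A • (⊤ : Submodule A M) < ⊤ :=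
    (Submodule.top_ne_ideal_smul_of_le_jacobson_annihilator
      (maximalIdeal_le_jacobson _)).symm.lt_top
  have hext := ModuleCat.subsingleton_ext_of_exists_isRegular (maximalIdeal A)
    (ModuleCat.of A (A ⧸ maximalIdeal A))
    (by rw [Module.support_eq_zeroLocus, Ideal.annihilator_quotient])
    (ModuleCat.of A M) hlt as hmem has
  obtain ⟨rs, hlen, hrs, hreg⟩ := exists_map_algebraMap_isWeaklyRegular (R := R) as.length
    (ModuleCat.of A M) hext
  exact ⟨rs, hlen, hrs, (isWeaklyRegular_map_algebraMap_iff A M rs).1 hreg⟩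

end RegularSequence

section Retract

variable {R A : Type u} [CommRing R] [IsNoetherianRing R] [IsLocalRing R] [CommRing A]
  [IsLocalRing A] [IsNoetherianRing A] [Algebra R A] [Algebra.IsIntegral R A]

/-- A finite `R`-module that is an `R`-direct summand of a finite Cohen-Macaulay `A`-module
is Cohen-Macaulay, for an integral extension `R → A` of Noetherian local rings. -/
theorem IsCMModule.of_leftInverse {M N : Type u} [AddCommGroup M] [Module A M] [Module R M]
    [IsScalarTower R A M] [Module.Finite A M] [AddCommGroup N] [Module R N] [Module.Finite R N]
    (f : N →ₗ[R] M) (g : M →ₗ[R] N) (hgf : g ∘ₗ f = LinearMap.id) (hM : IsCMModule A M) :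
    IsCMModule R N := by
  intro _
  have hinj : Function.Injective f :=
    Function.LeftInverse.injective (g := g) fun x ↦ LinearMap.congr_fun hgf x
  have : Nontrivial M := hinj.nontrivial
  have hdim : moduleDim R N ≤ moduleDim A M := by
    rw [moduleDim_eq_krullDim, moduleDim_eq_krullDim]
    refine krullDim_zeroLocus_le_of_comap_le fun r hr ↦ Module.mem_annihilator.2 fun x ↦ hinj ?_
    rw [map_smul, map_zero, ← algebraMap_smul A]
    exact Module.mem_annihilator.1 hr _
  have hdepth : moduleDepth A M ≤ moduleDepth R N := by
    refine sSup_le ?_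
    rintro _ ⟨as, rfl, hmem, has⟩
    obtain ⟨rs, hlen, hrs, hreg⟩ := exists_isWeaklyRegular_of_isRegular (R := R) M hmem has
    exact le_sSup ⟨rs, by rw [hlen], hrs,
      .of_isWeaklyRegular_of_mem_maximalIdeal N hrs (hreg.of_leftInverse f g hgf)⟩
  refine (moduleDepth_le_moduleDim R N).antisymm (hdim.trans ?_)
  rw [← hM inferInstance]
  exact WithBot.coe_le_coe.2 hdepth

theorem isCMModule_comap_quotient {I J : Ideal A} (ρ : A →ₗ[R] R)
    (hρ : ∀ r, ρ (algebraMap R A r) = r) (hI : ∀ x ∈ I, algebraMap R A (ρ x) ∈ I)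
    (hJ : ∀ x ∈ J, algebraMap R A (ρ x) ∈ J)
    (hCM : IsCMModule A (↥J ⧸ Submodule.comap (Submodule.subtype J) I)) :
    IsCMModule R (↥(J.comap (algebraMap R A)) ⧸
      Submodule.comap (Submodule.subtype (J.comap (algebraMap R A))) (I.comap (algebraMap R A))) := by
  let f₀ : ↥(J.comap (algebraMap R A)) →ₗ[R] ↥J :=
    { toFun := fun x ↦ ⟨algebraMap R A x, x.2⟩
      map_add' := fun x y ↦ Subtype.ext (map_add (algebraMap R A) (x : R) y)
      map_smul' := fun r x ↦ Subtype.ext <| by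
        simp [Algebra.smul_def] }
  let g₀ : ↥J →ₗ[R] ↥(J.comap (algebraMap R A)) :=
    { toFun := fun x ↦ ⟨ρ x, hJ x x.2⟩
      map_add' := fun x y ↦ Subtype.ext (map_add ρ (x : A) y)
      map_smul' := fun r x ↦ Subtype.ext (map_smul ρ r (x : A)) }
  let f := Submodule.liftQ
    (Submodule.comap (Submodule.subtype (J.comap (algebraMap R A))) (I.comap (algebraMap R A)))
    ((Submodule.mkQ (Submodule.comap (Submodule.subtype J) I)).restrictScalars R ∘ₗ f₀) fun x hx ↦
      (Submodule.Quotient.mk_eq_zero _).2 hx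
  let g := Submodule.liftQ ((Submodule.comap (Submodule.subtype J) I).restrictScalars R)
    (Submodule.mkQ (Submodule.comap (Submodule.subtype (J.comap (algebraMap R A)))
      (I.comap (algebraMap R A))) ∘ₗ g₀)
    fun x hx ↦ (Submodule.Quotient.mk_eq_zero _).2 (hI _ hx)
  refine hCM.of_leftInverse f
    (g ∘ₗ (Submodule.Quotient.restrictScalarsEquiv R
      (Submodule.comap (Submodule.subtype J) I)).symm.toLinearMap) ?_
  ext x
  refine congrArg (Submodule.Quotient.mk) (Subtype.ext ?_)
  exact hρ x

theorem exists_strictMono_of_monotone {α : Type*} [PartialOrder α] (ℓ : ℕ)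
    (E : Fin (ℓ + 1) → α) (hE : Monotone E) :
    ∃ (k : ℕ) (F : Fin (k + 1) → α), StrictMono F ∧ F 0 = E 0 ∧
      F (Fin.last k) = E (Fin.last ℓ) ∧ Set.range F = Set.range E ∧
      ∀ j : Fin k, ∃ i : Fin ℓ, F j.castSucc = E i.castSucc ∧ F j.succ = E i.succ := by
  induction ℓ with
  | zero =>
    exact ⟨0, E, Fin.strictMono_iff_lt_succ.2 fun i ↦ i.elim0, rfl, rfl, rfl, fun i ↦ i.elim0⟩
  | succ ℓ ih =>
    obtain ⟨k, F, hF, h0, hl, hr, hs⟩ := ih (fun i ↦ E i.castSucc)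
      (hE.comp Fin.strictMono_castSucc.monotone)
    have hrange : Set.range E =
        insert (E (Fin.last _)) (Set.range fun i : Fin (ℓ + 1) ↦ E i.castSucc) := by
      ext x
      simp [Fin.exists_fin_succ', or_comm, eq_comm]
    rcases (hE (Fin.le_last (Fin.last ℓ).castSucc)).eq_or_lt with h | h
    · refine ⟨k, F, hF, h0, hl.trans h, ?_, fun j ↦ ?_⟩
      · rw [hrange, hr, Set.insert_eq_of_mem]
        exact ⟨_, h⟩
      · obtain ⟨i, hi⟩ := hs j
        exact ⟨i.castSucc, hi⟩
    · refine ⟨k + 1, Fin.snoc F (E (Fin.last _)), ?_, ?_, ?_, ?_, fun j ↦ ?_⟩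
      · rw [Fin.strictMono_iff_lt_succ]
        intro j
        refine Fin.lastCases ?_ (fun j ↦ ?_) j
        · simpa [hl] using h
        · rw [Fin.snoc_castSucc, Fin.succ_castSucc, Fin.snoc_castSucc]
          exact hF j.castSucc_lt_succ
      · rw [← Fin.castSucc_zero, Fin.snoc_castSucc, h0]; rfl
      · simp
      · rw [hrange, ← hr, Fin.range_snoc]
      · refine Fin.lastCases ?_ (fun j ↦ ?_) j
        · exact ⟨Fin.last ℓ, by simpa using hl, by simp⟩
        · obtain ⟨i, hi₁, hi₂⟩ := hs j
          refine ⟨i.castSucc, ?_, ?_⟩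
          · rwa [Fin.snoc_castSucc]
          · rwa [Fin.succ_castSucc, Fin.snoc_castSucc]

/-- For an integral extension `R → A` of Noetherian local rings which splits as a map of
`R`-modules, `R` is sequentially Cohen-Macaulay if `A` is. -/
theorem IsSeqCMRing.of_retraction (ρ : A →ₗ[R] R) (hρ : ∀ r, ρ (algebraMap R A r) = r)
    (hA : IsSeqCMRing A) : IsSeqCMRing R := by
  have hinj : Function.Injective (algebraMap R A) := Function.LeftInverse.injective hρ
  obtain ⟨ℓ, D, ⟨hD0, hDl, hDmono, hDgr, hDex⟩, hCM⟩ := hA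
  have hmap (J : Ideal R) (i : Fin ℓ) (hJ : moduleDim R J ≤ moduleDim A (D i.succ)) :
      J.map (algebraMap R A) ≤ D i.succ :=
    (isGreatest_moduleDim_le_iff.1 (hDgr i)).2 _ ((moduleDim_map_le J).trans hJ)
  have hρD : ∀ i, ∀ x ∈ D i, algebraMap R A (ρ x) ∈ D i := by
    refine Fin.cases (fun x hx ↦ ?_) fun i x hx ↦ ?_
    · rw [hD0, Submodule.mem_bot] at hx ⊢
      rw [hx, map_zero, map_zero]
    · let J : Ideal R := ((D i.succ).restrictScalars R).map ρ
      refine hmap J i ?_ (Ideal.mem_map_of_mem _ ⟨x, hx, rfl⟩)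
      rw [moduleDim_eq_krullDim, moduleDim_eq_krullDim]
      refine krullDim_zeroLocus_le_of_comap_le fun r hr ↦ ?_
      rw [Submodule.mem_annihilator]
      rintro _ ⟨y, hy, rfl⟩
      rw [Ideal.mem_comap, Submodule.mem_annihilator] at hr
      rw [← map_smul, ← algebraMap_smul A, hr y hy, map_zero]
  obtain ⟨k, F, hF, hF0, hFl, hFr, hFs⟩ := exists_strictMono_of_monotone ℓ
    (fun i ↦ Ideal.comap (algebraMap R A) (D i))
    fun i j hij ↦ Ideal.comap_mono (hDmono.monotone hij)
  refine ⟨k, F, ⟨?_, ?_, hF, fun j ↦ ?_, fun N hN hNgr ↦ ?_⟩, fun j ↦ ?_⟩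
  · rw [hF0, hD0]
    exact Ideal.comap_bot_of_injective _ hinj
  · rw [hFl, hDl]
    rfl
  · obtain ⟨i, -, hi⟩ := hFs j
    rw [hi]
    exact isGreatest_moduleDim_le_iff.2 ⟨le_rfl, fun N hN ↦ Ideal.map_le_iff_le_comap.1
      (hmap N i (le_trans hN (moduleDim_comap_le _ hinj)))⟩
  · rw [isGreatest_moduleDim_le_iff] at hNgr
    obtain ⟨I, hIgr⟩ := exists_isGreatest_moduleDim_le A A (moduleDim R N)
    obtain ⟨hI, hImax⟩ := isGreatest_moduleDim_le_iff.1 hIgr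
    have hNI : N ≤ Ideal.comap (algebraMap R A) I :=
      Ideal.map_le_iff_le_comap.1 (hImax _ (moduleDim_map_le N))
    obtain ⟨i, rfl⟩ := hDex I
      (fun h ↦ hN (by
        rw [h] at hNI
        exact le_bot_iff.1 (hNI.trans (Ideal.comap_bot_of_injective _ hinj).le)))
      (isGreatest_moduleDim_le_iff.2 ⟨le_rfl, fun I' hI' ↦ hImax I' (hI'.trans hI)⟩)
    have hmem : N ∈ Set.range F := by
      rw [hFr]
      exact ⟨i, le_antisymm (hNgr.2 _ ((moduleDim_comap_le _ hinj).trans hI)) hNI⟩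
    exact hmem
  · obtain ⟨i, hi₁, hi₂⟩ := hFs j
    rw [hi₁, hi₂]
    exact isCMModule_comap_quotient ρ hρ (hρD _) (hρD _) (hCM i)

end Retract

section FixedSubring

variable (A : Type*) [CommRing A] (G : Subgroup (A ≃+* A))

theorem fixedSubring_isIntegral [Finite G] : Algebra.IsIntegral (fixedSubring A G) A := by
  have : Algebra.IsInvariant (fixedSubring A G) A G :=
    ⟨fun a ha ↦ ⟨⟨a, fun σ hσ ↦ ha ⟨σ, hσ⟩⟩, rfl⟩⟩
  exact Algebra.IsInvariant.isIntegral (fixedSubring A G) A G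

/-- The Reynolds operator splits the inclusion of the invariant subring. -/
theorem exists_fixedSubring_retraction [Finite G] (hG : IsUnit (Nat.card G : A)) :
    ∃ ρ : A →ₗ[fixedSubring A G] fixedSubring A G,
      ∀ r, ρ (algebraMap (fixedSubring A G) A r) = r := by
  have := Fintype.ofFinite G
  obtain ⟨c, hc⟩ := hG.exists_left_inv
  have hinv : ∀ σ ∈ G, σ c = c := fun σ _ ↦ by
    refine hG.mul_left_injective ?_
    have := congrArg σ hc
    rw [map_mul, map_natCast, map_one] at this
    exact this.trans hc.symm
  have hsum (a : A) : ∀ σ ∈ G, σ (c * ∑ τ : G, τ.1 a) = c * ∑ τ : G, τ.1 a := fun σ hσ ↦ by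
    rw [map_mul, hinv σ hσ, map_sum]
    congr 1
    exact Fintype.sum_equiv (Equiv.mulLeft (⟨σ, hσ⟩ : G)) _ _ fun τ ↦ rfl
  refine ⟨{ toFun := fun a ↦ ⟨c * ∑ τ : G, τ.1 a, hsum a⟩
            map_add' := fun a b ↦ Subtype.ext ?_
            map_smul' := fun r a ↦ Subtype.ext ?_ }, fun r ↦ Subtype.ext ?_⟩
  · simp [Finset.sum_add_distrib, mul_add]
  · have h (τ : G) : τ.1 (r.1 * a) = r.1 * τ.1 a := by rw [map_mul, r.2 τ.1 τ.2]
    change c * ∑ τ : G, τ.1 (r.1 * a) = r.1 * (c * ∑ τ : G, τ.1 a)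
    simp only [h, ← Finset.mul_sum]
    ring
  · change c * ∑ τ : G, τ.1 r.1 = r.1
    have h (τ : G) : τ.1 r.1 = r.1 := r.2 τ.1 τ.2
    simp only [h, Finset.sum_const, Finset.card_univ, ← Nat.card_eq_fintype_card, nsmul_eq_mul]
    rw [← mul_assoc, hc, one_mul]

end FixedSubring

/-- If `A` is a sequentially Cohen-Macaulay local ring and `G` is a finite
group of automorphisms of `A` whose order is invertible in `A`, then the invariant subring
`A^G` is a sequentially Cohen-Macaulay local ring. -/
theorem stmt10 (A : Type*) [CommRing A] [IsNoetherianRing A] [IsLocalRing A]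
    (G : Subgroup (A ≃+* A)) [Finite G] (hG : IsUnit (Nat.card G : A))
    [IsNoetherianRing (fixedSubring A G)] [IsLocalRing (fixedSubring A G)]
    (hA : IsSeqCMRing A) :
    IsSeqCMRing (fixedSubring A G) := by
  have := fixedSubring_isIntegral A G
  obtain ⟨ρ, hρ⟩ := exists_fixedSubring_retraction A G hG
  exact hA.of_retraction ρ hρ
end

section
/- Let R be a Noetherian local ring and M a nonzero finitely generated R-module. The idealization A = R ⋉ M is a sequentially Cohen-Macaulay local ring if and only if R is a sequentially Cohen-Macaulay local ring and M is a sequentially Cohen-Macaulay R-module. -/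
open IsLocalRing

section Depth

open RingTheory.Sequence

/-- There is a weakly `M`-regular sequence of length `n` in the maximal ideal. -/
def DepthGE (R : Type*) [CommRing R] [IsLocalRing R] (M : Type*) [AddCommGroup M] [Module R M]
    (n : ℕ) : Prop :=
  ∃ rs : List R, rs.length = n ∧ (∀ r ∈ rs, r ∈ maximalIdeal R) ∧ IsWeaklyRegular M rs

universe u v

variable {R : Type u} [CommRing R] [IsLocalRing R]

lemma depthGE_zero (M : Type*) [AddCommGroup M] [Module R M] : DepthGE R M 0 :=
  ⟨[], rfl, by simp, by simp⟩

lemma depthGE_congr {M N : Type*} [AddCommGroup M] [Module R M] [AddCommGroup N] [Module R N]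
    (e : M ≃ₗ[R] N) (n : ℕ) : DepthGE R M n ↔ DepthGE R N n := by
  simp only [DepthGE, e.isWeaklyRegular_congr]

lemma depthGE_of_subsingleton (M : Type*) [AddCommGroup M] [Module R M] [Subsingleton M] (n : ℕ) :
    DepthGE R M n := by
  induction n generalizing M with
  | zero => exact depthGE_zero M
  | succ n ih =>
    have : Subsingleton (QuotSMulTop (0 : R) M) := (Submodule.mkQ_surjective _).subsingleton
    obtain ⟨rs, h1, h2, h3⟩ := ih (QuotSMulTop (0 : R) M)
    refine ⟨0 :: rs, by simp [h1], by simpa using h2, ?_⟩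
    rw [isWeaklyRegular_cons_iff]
    exact ⟨fun _ _ _ ↦ Subsingleton.elim _ _, h3⟩

lemma depthGE_succ_iff_exists {M : Type*} [AddCommGroup M] [Module R M] {n : ℕ} :
    DepthGE R M (n + 1) ↔
      ∃ x ∈ maximalIdeal R, IsSMulRegular M x ∧ DepthGE R (QuotSMulTop x M) n := by
  constructor
  · rintro ⟨_ | ⟨x, rs⟩, h1, h2, h3⟩
    · simp at h1
    · rw [isWeaklyRegular_cons_iff] at h3
      simp only [List.mem_cons, forall_eq_or_imp] at h2
      exact ⟨x, h2.1, h3.1, rs, by simpa using h1, h2.2, h3.2⟩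
  · rintro ⟨x, hx, hr, rs, h1, h2, h3⟩
    refine ⟨x :: rs, by simp [h1], by simpa using ⟨hx, h2⟩, ?_⟩
    rw [isWeaklyRegular_cons_iff]
    exact ⟨hr, h3⟩

open CategoryTheory Abelian Limits in
private lemma depthGE_quotSMulTop_aux [IsNoetherianRing R] {M : Type (max u v)} [AddCommGroup M]
    [Module R M] [Module.Finite R M] {n : ℕ} {x : R} (hx : x ∈ maximalIdeal R)
    (hr : IsSMulRegular M x) (h : DepthGE R M (n + 1)) : DepthGE R (QuotSMulTop x M) n := by
  rcases subsingleton_or_nontrivial M with hM | hM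
  · have : Subsingleton (QuotSMulTop x M) := (Submodule.mkQ_surjective _).subsingleton
    exact depthGE_of_subsingleton _ _
  have := nontrivial_quotSMulTop_of_mem_maximalIdeal M hx
  have hlt (N : Type (max u v)) [AddCommGroup N] [Module R N] [Module.Finite R N] [Nontrivial N] :
      maximalIdeal R • (⊤ : Submodule R N) < ⊤ :=
    (Submodule.top_ne_ideal_smul_of_le_jacobson_annihilator
      (maximalIdeal_le_jacobson _)).symm.lt_top
  obtain ⟨rs, h1, h2, h3⟩ := h
  have hext := ((ModuleCat.exists_isRegular_tfae (maximalIdeal R) (n + 1) (ModuleCat.of R M)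
    (hlt M)).out 3 1 rfl rfl).mp ⟨rs, h1, h2,
      IsRegular.of_isWeaklyRegular_of_mem_maximalIdeal _ h2 h3⟩
  obtain ⟨rs, h1, h2, h3⟩ := ((ModuleCat.exists_isRegular_tfae (maximalIdeal R) n
    (ModuleCat.of R (QuotSMulTop x M)) (hlt _)).out 1 3).mp (by
      intro i hi
      have zero1 := AddCommGrpCat.isZero_of_iff_subsingleton.mpr (hext i (by omega))
      have zero2 := AddCommGrpCat.isZero_of_iff_subsingleton.mpr (hext (i + 1) (by omega))
      exact AddCommGrpCat.subsingleton_of_isZero <| ShortComplex.Exact.isZero_of_both_zeros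
        ((Ext.covariant_sequence_exact₃' _
          (IsSMulRegular.smulShortComplex_shortExact (M := ModuleCat.of R M) hr)) i (i + 1) rfl)
        (zero1.eq_zero_of_src _) (zero2.eq_zero_of_tgt _))
  exact ⟨rs, h1, h2, h3.1⟩

lemma depthGE_succ_iff_of_isSMulRegular [IsNoetherianRing R] {M : Type v} [AddCommGroup M]
    [Module R M] [Module.Finite R M] {n : ℕ} {x : R} (hx : x ∈ maximalIdeal R)
    (hr : IsSMulRegular M x) : DepthGE R M (n + 1) ↔ DepthGE R (QuotSMulTop x M) n := by
  refine ⟨fun h ↦ ?_, fun h ↦ depthGE_succ_iff_exists.mpr ⟨x, hx, hr, h⟩⟩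
  have e : ULift.{u} M ≃ₗ[R] M := ULift.moduleEquiv
  exact (depthGE_congr (QuotSMulTop.congr x e) n).mp <|
    depthGE_quotSMulTop_aux.{u, v} hx ((e.isSMulRegular_congr x).mpr hr)
      ((depthGE_congr e _).mpr h)

omit [IsLocalRing R] in
lemma isSMulRegular_prod_iff {M N : Type*} [AddCommGroup M] [Module R M] [AddCommGroup N]
    [Module R N] {x : R} :
    IsSMulRegular (M × N) x ↔ IsSMulRegular M x ∧ IsSMulRegular N x := by
  refine ⟨fun h ↦ ⟨fun a b hab ↦ ?_, fun a b hab ↦ ?_⟩, fun h a b hab ↦ ?_⟩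
  · exact congrArg Prod.fst (@h (a, 0) (b, 0) (Prod.ext hab rfl))
  · exact congrArg Prod.snd (@h (0, a) (0, b) (Prod.ext rfl hab))
  · exact Prod.ext (h.1 (congrArg Prod.fst hab)) (h.2 (congrArg Prod.snd hab))

open Pointwise in
/-- Reduction modulo an element commutes with binary products. -/
noncomputable def quotSMulTopProdEquiv (M N : Type*) [AddCommGroup M] [Module R M]
    [AddCommGroup N] [Module R N] (x : R) :
    QuotSMulTop x (M × N) ≃ₗ[R] QuotSMulTop x M × QuotSMulTop x N :=
  (Submodule.quotEquivOfEq _ _ (by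
    ext ⟨a, b⟩
    simp [LinearMap.ker_prodMap, Submodule.mem_smul_pointwise_iff_exists])).trans
  (LinearMap.quotKerEquivOfSurjective
    ((x • (⊤ : Submodule R M)).mkQ.prodMap (x • (⊤ : Submodule R N)).mkQ)
    ((Submodule.mkQ_surjective _).prodMap (Submodule.mkQ_surjective _)))

lemma exists_isSMulRegular_iff_subsingleton_hom [IsNoetherianRing R] {M : Type*}
    [AddCommGroup M] [Module R M] [Module.Finite R M] : (∃ x ∈ maximalIdeal R, IsSMulRegular M x) ↔
      Subsingleton (R ⧸ maximalIdeal R →ₗ[R] M) := by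
  rw [IsSMulRegular.subsingleton_linearMap_iff, Ideal.annihilator_quotient]

lemma depthGE_prod_iff [IsNoetherianRing R] {M N : Type*} [AddCommGroup M] [Module R M]
    [AddCommGroup N] [Module R N] [Module.Finite R M] [Module.Finite R N] {n : ℕ} :
    DepthGE R (M × N) n ↔ DepthGE R M n ∧ DepthGE R N n := by
  induction n generalizing M N with
  | zero => simp [depthGE_zero]
  | succ n ih =>
    suffices H : ∀ x ∈ maximalIdeal R, IsSMulRegular (M × N) x →
        (DepthGE R (M × N) (n + 1) ↔ DepthGE R M (n + 1) ∧ DepthGE R N (n + 1)) by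
      constructor
      · intro h
        obtain ⟨x, hx, hr, -⟩ := depthGE_succ_iff_exists.mp h
        exact (H x hx hr).mp h
      · intro h
        obtain ⟨x, hx, hr, -⟩ := depthGE_succ_iff_exists.mp h.1
        obtain ⟨y, hy, hs, -⟩ := depthGE_succ_iff_exists.mp h.2
        have h1 := exists_isSMulRegular_iff_subsingleton_hom.mp ⟨x, hx, hr⟩
        have h2 := exists_isSMulRegular_iff_subsingleton_hom.mp ⟨y, hy, hs⟩
        obtain ⟨z, hz, ht⟩ :=
          (exists_isSMulRegular_iff_subsingleton_hom (R := R) (M := M × N)).mpr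
          (LinearMap.prodEquiv R).symm.toEquiv.subsingleton
        exact (H z hz ht).mpr h
    intro x hx hr
    have hr' := isSMulRegular_prod_iff.mp hr
    rw [depthGE_succ_iff_of_isSMulRegular hx hr, depthGE_succ_iff_of_isSMulRegular hx hr'.1,
      depthGE_succ_iff_of_isSMulRegular hx hr'.2, depthGE_congr (quotSMulTopProdEquiv M N x), ih]

/-- Depth does not change along a local homomorphism whose maximal ideal is generated by that of
the base up to nilpotents. -/
lemma depthGE_iff_of_isScalarTower {A : Type*} [CommRing A] [IsLocalRing A] [IsNoetherianRing A]
    [Algebra R A] (h1 : ∀ r ∈ maximalIdeal R, algebraMap R A r ∈ maximalIdeal A)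
    (h2 : ∀ a ∈ maximalIdeal A, ∃ r ∈ maximalIdeal R, IsNilpotent (a - algebraMap R A r))
    {N : Type*} [AddCommGroup N] [Module A N] [Module R N] [IsScalarTower R A N]
    [Module.Finite A N] {n : ℕ} : DepthGE A N n ↔ DepthGE R N n := by
  constructor
  · intro h
    induction n generalizing N with
    | zero => exact depthGE_zero N
    | succ n ih =>
      obtain ⟨a, ha, hr, -⟩ := depthGE_succ_iff_exists.mp h
      obtain ⟨r, hrm, hnil⟩ := h2 a ha
      have hreg : IsSMulRegular N (algebraMap R A r) := by
        obtain ⟨k, hk⟩ := hnil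
        have : a ^ k ∈ Ideal.span {algebraMap R A r} := by
          rw [← Ideal.Quotient.eq_zero_iff_mem]
          have h0 := congrArg (Ideal.Quotient.mk (Ideal.span {algebraMap R A r})) hk
          simpa [Ideal.Quotient.eq_zero_iff_mem.mpr (Ideal.mem_span_singleton_self _)] using h0
        obtain ⟨c, hc⟩ := Ideal.mem_span_singleton'.mp this
        exact IsSMulRegular.of_mul (a := c) (hc ▸ hr.pow k)
      rw [depthGE_succ_iff_of_isSMulRegular (h1 r hrm) hreg] at h
      obtain ⟨rs, e1, e2, e3⟩ := ih h
      refine ⟨r :: rs, by simp [e1], by simpa using ⟨hrm, e2⟩, ?_⟩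
      rw [← isWeaklyRegular_map_algebraMap_iff A] at e3 ⊢
      rw [List.map_cons, isWeaklyRegular_cons_iff]
      exact ⟨hreg, e3⟩
  · rintro ⟨rs, e1, e2, e3⟩
    refine ⟨rs.map (algebraMap R A), by simpa using e1, ?_, ?_⟩
    · simpa using fun r hr ↦ h1 r (e2 r hr)
    · rwa [isWeaklyRegular_map_algebraMap_iff]

lemma isCMModule_iff_depthGE [IsNoetherianRing R] {M : Type*} [AddCommGroup M] [Module R M]
    [Module.Finite R M] {n : ℕ} (hn : Nontrivial M → moduleDim R M = n) :
    IsCMModule R M ↔ DepthGE R M n := by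
  rcases subsingleton_or_nontrivial M with hM | hM
  · exact ⟨fun _ ↦ depthGE_of_subsingleton M n, fun _ h ↦ (not_nontrivial M h).elim⟩
  have hn := hn hM
  have hle : ∀ rs : List R, IsRegular M rs → rs.length ≤ n := by
    intro rs hrs
    have := Module.supportDim_add_length_eq_supportDim_of_isRegular rs hrs
    have hntr := hrs.quot_ofList_smul_nontrivial (⊤ : Submodule R M)
    rw [Module.supportDim_eq_ringKrullDim_quotient_annihilator R M] at this
    rw [moduleDim] at hn
    rw [hn] at this
    have h0 : (0 : WithBot ℕ∞) ≤
        Module.supportDim R (M ⧸ Ideal.ofList rs • (⊤ : Submodule R M)) := by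
      rw [Module.supportDim, Order.krullDim_nonneg_iff]
      exact Module.nonempty_support_of_nontrivial.to_subtype
    have : (rs.length : WithBot ℕ∞) ≤ n := by
      rw [← this]
      exact le_add_of_nonneg_left h0
    exact_mod_cast this
  have key : moduleDepth R M = n ↔ DepthGE R M n := by
    constructor
    · intro h
      have hne : {n : ℕ∞ | ∃ rs : List R, (rs.length : ℕ∞) = n ∧
          (∀ r ∈ rs, r ∈ maximalIdeal R) ∧ IsRegular M rs}.Nonempty :=
        ⟨0, [], rfl, by simp, IsRegular.nil R M⟩
      have := hne.to_subtype
      obtain ⟨rs, h1, h2, h3⟩ :=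
        ENat.sSup_mem_of_nonempty_of_lt_top (h.trans_lt (ENat.natCast_lt_top n))
      exact ⟨rs, by exact_mod_cast h1.trans h, h2, h3.1⟩
    · rintro ⟨rs, h1, h2, h3⟩
      apply le_antisymm
      · apply sSup_le
        rintro _ ⟨rs, rfl, -, h⟩
        exact_mod_cast hle rs h
      · exact le_sSup ⟨rs, by rw [h1], h2,
          IsRegular.of_isWeaklyRegular_of_mem_maximalIdeal M h2 h3⟩
  rw [IsCMModule, hn, ← key]
  constructor
  · intro h; exact_mod_cast h hM
  · intro h _; rw [h]; rfl

end Depth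

section DimLT

open Order

/-- The submodule of elements `x` with `dim (R / ann x) < n`, i.e. the largest submodule of
dimension `< n` when `M` is Noetherian. -/
def dimLT (R : Type*) [CommRing R] (M : Type*) [AddCommGroup M] [Module R M] (n : ℕ) :
    Submodule R M where
  carrier := {x | ∀ p : PrimeSpectrum R, (∀ r : R, r • x = 0 → r ∈ p.asIdeal) →
    coheight p < n}
  zero_mem' p hp := (p.isPrime.ne_top ((Ideal.eq_top_iff_one _).mpr (hp 1 (smul_zero _)))).elim
  add_mem' {x y} hx hy p hp := by
    by_contra hn
    have h1 := mt (hx p) hn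
    have h2 := mt (hy p) hn
    push Not at h1 h2
    obtain ⟨r, hr, hrp⟩ := h1
    obtain ⟨s, hs, hsp⟩ := h2
    refine (p.isPrime.mul_notMem hrp hsp) (hp _ ?_)
    rw [smul_add, mul_smul, mul_smul, hs, smul_comm, hr, smul_zero, smul_zero, add_zero]
  smul_mem' c x hx p hp := hx p fun r hr ↦ hp r (by rw [smul_comm, hr, smul_zero])

variable {R : Type*} [CommRing R] {M : Type*} [AddCommGroup M] [Module R M]

lemma mem_dimLT {n : ℕ} {x : M} : x ∈ dimLT R M n ↔
    ∀ p : PrimeSpectrum R, (∀ r : R, r • x = 0 → r ∈ p.asIdeal) → coheight p < n :=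
  Iff.rfl

lemma krullDim_zeroLocus_lt_iff (I : Ideal R) (n : ℕ) :
    krullDim (PrimeSpectrum.zeroLocus (I : Set R)) < n ↔
      ∀ p : PrimeSpectrum R, I ≤ p.asIdeal → coheight p < n := by
  rw [krullDim_lt_coe_iff]
  constructor
  · intro h p hp
    by_contra! hn
    obtain ⟨l, hl, hlen⟩ := exists_series_of_le_coheight p hn
    have hmem (i : Fin (l.length + 1)) : l i ∈ PrimeSpectrum.zeroLocus (I : Set R) :=
      fun r hr ↦ (hl ▸ LTSeries.head_le l i : p ≤ l i) (hp hr)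
    have := h ⟨l.length, fun i ↦ ⟨l i, hmem i⟩, fun i ↦ l.step i⟩
    simp only at this
    omega
  · intro h l
    have := h l.head.1 l.head.2
    have h2 := length_le_coheight_head (p := l.map Subtype.val (fun _ _ h ↦ h))
    exact_mod_cast lt_of_le_of_lt h2 this

lemma moduleDim_lt_iff [Module.Finite R M] {n : ℕ} :
    moduleDim R M < n ↔ ∀ x : M, x ∈ dimLT R M n := by
  rw [moduleDim, ringKrullDim_quotient, krullDim_zeroLocus_lt_iff]
  simp only [mem_dimLT]
  rw [forall_comm]
  refine forall_congr' fun p ↦ ?_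
  rw [← Module.mem_support_iff_of_finite (R := R), Module.mem_support_iff_exists_annihilator]
  simp [SetLike.le_def]

lemma coe_mem_dimLT {N : Submodule R M} {n : ℕ} {x : N} :
    (x : M) ∈ dimLT R M n ↔ x ∈ dimLT R N n := by
  simp only [mem_dimLT, ← Submodule.coe_smul, ZeroMemClass.coe_eq_zero]

lemma moduleDim_submodule_lt_iff [IsNoetherian R M] {n : ℕ} {N : Submodule R M} :
    moduleDim R N < n ↔ N ≤ dimLT R M n := by
  simp [moduleDim_lt_iff, SetLike.le_def, ← coe_mem_dimLT]

lemma dimLT_zero : dimLT R M 0 = ⊥ := by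
  rw [eq_bot_iff]
  intro x hx
  by_contra h
  obtain ⟨m, hm, hle⟩ := Ideal.exists_le_maximal (Submodule.span R {x}).annihilator (by
    rw [ne_eq, Submodule.annihilator_eq_top_iff, Submodule.span_singleton_eq_bot]
    exact h)
  have := hx ⟨m, hm.isPrime⟩ fun r hr ↦
    hle ((Submodule.mem_annihilator_span_singleton x r).mpr hr)
  simp at this

lemma dimLT_mono : Monotone (dimLT R M) := fun _ _ h _ hx p hp ↦
  (hx p hp).trans_le (by exact_mod_cast h)

lemma mem_dimLT_map {N : Type*} [AddCommGroup N] [Module R N] (f : M →ₗ[R] N) {n : ℕ} {x : M}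
    (hx : x ∈ dimLT R M n) : f x ∈ dimLT R N n :=
  fun p hp ↦ hx p fun r hr ↦ hp r (by rw [← map_smul, hr, map_zero])

lemma withBot_lt_natCast_add_one_iff {d : WithBot ℕ∞} {n : ℕ} :
    d < ((n + 1 : ℕ) : WithBot ℕ∞) ↔ d ≤ n := by
  rw [Nat.cast_add_one, ENat.WithBot.lt_add_one_iff]

lemma moduleDim_submodule_le_iff [IsNoetherian R M] {n : ℕ} {N : Submodule R M} :
    moduleDim R N ≤ n ↔ N ≤ dimLT R M (n + 1) := by
  rw [← withBot_lt_natCast_add_one_iff, moduleDim_submodule_lt_iff]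

/-- The `n`-th graded piece of the dimension filtration. -/
abbrev dimQuot (R : Type*) [CommRing R] (M : Type*) [AddCommGroup M] [Module R M] (n : ℕ) :=
  ↥(dimLT R M (n + 1)) ⧸ (dimLT R M n).comap (dimLT R M (n + 1)).subtype

lemma dimLT_lt_of_nontrivial_dimQuot {n : ℕ} (h : Nontrivial (dimQuot R M n)) :
    dimLT R M n < dimLT R M (n + 1) := by
  refine lt_of_le_of_ne (dimLT_mono n.le_succ) fun he ↦ ?_
  rw [Submodule.Quotient.nontrivial_iff, ne_eq, Submodule.comap_subtype_eq_top] at h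
  exact h he.ge

lemma moduleDim_dimQuot [IsNoetherian R M] {n : ℕ} (h : Nontrivial (dimQuot R M n)) :
    moduleDim R (dimQuot R M n) = n := by
  apply le_antisymm
  · rw [← withBot_lt_natCast_add_one_iff, moduleDim_lt_iff]
    intro q
    obtain ⟨x, rfl⟩ := Submodule.mkQ_surjective _ q
    exact mem_dimLT_map _ (coe_mem_dimLT.mp x.2)
  · by_contra! hlt
    rw [moduleDim_lt_iff] at hlt
    refine (dimLT_lt_of_nontrivial_dimQuot h).not_ge fun x hx p hp ↦ ?_
    by_cases hq : ∀ r : R, r • x ∈ dimLT R M n → r ∈ p.asIdeal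
    · refine hlt (Submodule.Quotient.mk ⟨x, hx⟩) p fun r hr ↦ hq r ?_
      rw [← Submodule.Quotient.mk_smul, Submodule.Quotient.mk_eq_zero] at hr
      exact hr
    · push Not at hq
      obtain ⟨r, hr, hrp⟩ := hq
      refine hr p fun s hs ↦ ?_
      rw [← mul_smul] at hs
      exact (p.isPrime.mem_or_mem (hp _ hs)).resolve_right hrp

lemma exists_moduleDim_eq [IsNoetherianRing R] [IsLocalRing R] [Nontrivial M] :
    ∃ n : ℕ, moduleDim R M = n := by
  have : Nontrivial (R ⧸ Module.annihilator R M) :=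
    Ideal.Quotient.nontrivial_iff.mpr (by
      rw [ne_eq, Module.annihilator_eq_top_iff]; exact not_subsingleton M)
  have : IsLocalRing (R ⧸ Module.annihilator R M) :=
    .of_surjective' (Ideal.Quotient.mk _) Ideal.Quotient.mk_surjective
  have h1 := ringKrullDim_ne_top (R := R ⧸ Module.annihilator R M)
  have h2 := ringKrullDim_ne_bot (R := R ⧸ Module.annihilator R M)
  rw [moduleDim]
  generalize ringKrullDim (R ⧸ Module.annihilator R M) = d at h1 h2
  induction d with
  | bot => exact (h2 rfl).elim
  | coe d =>
    induction d with
    | top => exact (h1 rfl).elim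
    | coe d => exact ⟨d, rfl⟩

lemma isGreatest_moduleDim_iff [IsNoetherian R M] {n : ℕ} {N : Submodule R M}
    (hN : moduleDim R N = n) :
    IsGreatest {N' : Submodule R M | moduleDim R ↥N' ≤ moduleDim R ↥N} N ↔
      N = dimLT R M (n + 1) := by
  have : {N' : Submodule R M | moduleDim R ↥N' ≤ moduleDim R ↥N} =
      Set.Iic (dimLT R M (n + 1)) := by
    ext N'
    simp only [Set.mem_ofPred_eq, Set.mem_Iic]
    rw [hN, moduleDim_submodule_le_iff]
  rw [this]
  exact ⟨fun h ↦ h.unique isGreatest_Iic, fun h ↦ h ▸ isGreatest_Iic⟩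

lemma moduleDim_dimLT [IsNoetherian R M] {n : ℕ} (h : dimLT R M n < dimLT R M (n + 1)) :
    moduleDim R (dimLT R M (n + 1)) = n := by
  apply le_antisymm
  · rw [moduleDim_submodule_le_iff]
  · by_contra! hlt
    exact h.not_ge (moduleDim_submodule_lt_iff.mp hlt)

lemma exists_eq_dimLT_of_isGreatest [IsNoetherianRing R] [IsLocalRing R] [IsNoetherian R M]
    {N : Submodule R M} (h0 : N ≠ ⊥)
    (h : IsGreatest {N' : Submodule R M | moduleDim R ↥N' ≤ moduleDim R ↥N} N) :
    ∃ n : ℕ, N = dimLT R M (n + 1) ∧ moduleDim R N = n := by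
  have := Submodule.nontrivial_iff_ne_bot.mpr h0
  obtain ⟨n, hn⟩ := exists_moduleDim_eq (R := R) (M := N)
  exact ⟨n, (isGreatest_moduleDim_iff hn).mp h, hn⟩

end DimLT

section Filtration

variable {R : Type*} [CommRing R] [IsNoetherianRing R] [IsLocalRing R]
  {M : Type*} [AddCommGroup M] [Module R M] [IsNoetherian R M]

lemma isCMModule_iff_of_eq_dimLT {n : ℕ} {N₁ N₂ : Submodule R M}
    (h₁ : N₁ = dimLT R M (n + 1)) (h₂ : N₂ = dimLT R M n) :
    IsCMModule R (N₁ ⧸ N₂.comap N₁.subtype) ↔ DepthGE R (dimQuot R M n) n := by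
  subst h₁ h₂
  exact isCMModule_iff_depthGE moduleDim_dimQuot

variable (R M) in
lemma exists_dimLT_eq_top : ∃ n : ℕ, dimLT R M n = ⊤ := by
  rcases subsingleton_or_nontrivial M with hM | hM
  · exact ⟨0, Subsingleton.elim _ _⟩
  obtain ⟨n, hn⟩ := exists_moduleDim_eq (R := R) (M := M)
  refine ⟨n + 1, eq_top_iff.mpr fun x _ ↦ ?_⟩
  exact moduleDim_lt_iff.mp (withBot_lt_natCast_add_one_iff.mpr hn.le) x

/-- The terms of a dimension filtration are the submodules `dimLT`. -/
lemma IsDimFiltration.eq_dimLT {ℓ : ℕ} {D : Fin (ℓ + 1) → Submodule R M}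
    (hD : IsDimFiltration R M ℓ D) (i : Fin ℓ) {n : ℕ} (hn : D i.succ = dimLT R M (n + 1))
    (hdim : moduleDim R (D i.succ) = n) : D i.castSucc = dimLT R M n := by
  obtain ⟨hbot, -, hmono, hgr, hex⟩ := hD
  have hlt : D i.castSucc < D i.succ := hmono i.castSucc_lt_succ
  have hFlt : dimLT R M n < D i.succ := by
    refine lt_of_le_of_ne (hn ▸ dimLT_mono n.le_succ) fun he ↦ ?_
    have := moduleDim_submodule_lt_iff.mpr he.ge
    exact this.ne hdim
  apply le_antisymm
  · by_cases h0 : i.castSucc = 0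
    · rw [h0, hbot]; exact bot_le
    · obtain ⟨k, hk⟩ := Fin.exists_succ_eq.mpr h0
      have hne : D i.castSucc ≠ ⊥ := by
        rw [← hbot]
        exact hmono.injective.ne h0
      obtain ⟨m, hm, -⟩ := exists_eq_dimLT_of_isGreatest hne (hk ▸ hgr k)
      rw [hm]
      apply dimLT_mono
      rw [hm, hn] at hlt
      by_contra! h
      exact hlt.not_ge (dimLT_mono (by omega))
  · by_cases hF : dimLT R M n = ⊥
    · rw [hF]; exact bot_le
    · have := Submodule.nontrivial_iff_ne_bot.mpr hF
      obtain ⟨e, he⟩ := exists_moduleDim_eq (R := R) (M := dimLT R M n)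
      have hen : e < n := by
        have := he ▸ moduleDim_submodule_lt_iff.mpr (le_refl (dimLT R M n))
        exact_mod_cast this
      have heq : dimLT R M n = dimLT R M (e + 1) :=
        le_antisymm (moduleDim_submodule_le_iff.mp he.le) (dimLT_mono hen)
      obtain ⟨j, hj⟩ := hex _ hF ((isGreatest_moduleDim_iff he).mpr heq)
      rw [← hj] at hFlt ⊢
      exact hmono.monotone (Fin.le_castSucc_iff.mpr (hmono.lt_iff_lt.mp hFlt))

variable (R M) in
lemma exists_isDimFiltration :
    ∃ (ℓ : ℕ) (D : Fin (ℓ + 1) → Submodule R M), IsDimFiltration R M ℓ D := by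
  classical
  obtain ⟨d, hd⟩ := exists_dimLT_eq_top R M
  let J := (Finset.range d).filter fun n ↦ dimLT R M n ≠ dimLT R M (n + 1)
  let e := J.orderEmbOfFin rfl
  have he (i) : dimLT R M (e i) < dimLT R M (e i + 1) := by
    have := J.orderEmbOfFin_mem rfl i
    simp only [J, Finset.mem_filter] at this
    exact lt_of_le_of_ne (dimLT_mono (Nat.le_succ _)) this.2
  let D : Fin (J.card + 1) → Submodule R M := Fin.cons ⊥ fun i ↦ dimLT R M (e i + 1)
  have hD0 : D 0 = ⊥ := rfl
  have hDs (i : Fin J.card) : D i.succ = dimLT R M (e i + 1) := rfl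
  have hmono : StrictMono D := by
    intro i j hij
    obtain ⟨j, rfl⟩ := Fin.exists_succ_eq.mpr (Fin.ne_zero_of_lt hij)
    induction i using Fin.cases with
    | zero => exact bot_le.trans_lt (he j)
    | succ i =>
      rw [hDs, hDs]
      exact (dimLT_mono (e.strictMono (Fin.succ_lt_succ_iff.mp hij))).trans_lt (he j)
  have hall (n : ℕ) : ∃ i, D i = dimLT R M n := by
    induction n with
    | zero => exact ⟨0, by rw [hD0, dimLT_zero]⟩
    | succ n ih =>
      by_cases h : dimLT R M n = dimLT R M (n + 1)
      · exact h ▸ ih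
      · have hmem : n ∈ J := by
          simp only [J, Finset.mem_filter, Finset.mem_range]
          refine ⟨?_, h⟩
          by_contra! hdn
          have h1 := top_le_iff.mp (hd ▸ dimLT_mono (R := R) (M := M) hdn)
          have h2 := top_le_iff.mp (hd ▸ dimLT_mono (R := R) (M := M) (hdn.trans n.le_succ))
          exact h (h1.trans h2.symm)
        obtain ⟨i, hi⟩ : n ∈ Set.range e := by
          rw [Finset.range_orderEmbOfFin]; exact hmem
        exact ⟨i.succ, by rw [hDs, hi]⟩
  refine ⟨J.card, D, hD0, ?_, hmono, fun i ↦ ?_, fun N h0 hN ↦ ?_⟩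
  · obtain ⟨i, hi⟩ := hall d
    exact top_le_iff.mp (hd ▸ hi ▸ hmono.monotone (Fin.le_last i))
  · exact (isGreatest_moduleDim_iff (n := e i) (moduleDim_dimLT (he i))).mpr rfl
  · obtain ⟨n, hn, -⟩ := exists_eq_dimLT_of_isGreatest h0 hN
    exact hn ▸ hall _

variable (R M) in
lemma isSeqCM_iff : IsSeqCM R M ↔ ∀ n, DepthGE R (dimQuot R M n) n := by
  have key {ℓ : ℕ} {D : Fin (ℓ + 1) → Submodule R M} (hD : IsDimFiltration R M ℓ D)
      (i : Fin ℓ) : ∃ n, D i.succ = dimLT R M (n + 1) ∧ D i.castSucc = dimLT R M n := by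
    have hne : D i.succ ≠ ⊥ := (bot_le.trans_lt (hD.2.2.1 i.castSucc_lt_succ)).ne'
    obtain ⟨n, hn, hdim⟩ := exists_eq_dimLT_of_isGreatest hne (hD.2.2.2.1 i)
    exact ⟨n, hn, hD.eq_dimLT i hn hdim⟩
  constructor
  · rintro ⟨ℓ, D, hD, hCM⟩ n
    rcases subsingleton_or_nontrivial (dimQuot R M n) with h | h
    · exact depthGE_of_subsingleton _ n
    have hlt := dimLT_lt_of_nontrivial_dimQuot h
    have hdim := moduleDim_dimLT hlt
    obtain ⟨j, hj⟩ := hD.2.2.2.2 _ (bot_le.trans_lt hlt).ne'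
      ((isGreatest_moduleDim_iff hdim).mpr rfl)
    have hj0 : j ≠ 0 := by
      rintro rfl
      rw [hD.1] at hj
      exact (bot_le.trans_lt hlt).ne hj
    obtain ⟨i, rfl⟩ := Fin.exists_succ_eq.mpr hj0
    exact (isCMModule_iff_of_eq_dimLT hj (hD.eq_dimLT i hj (hj ▸ hdim))).mp (hCM i)
  · intro h
    obtain ⟨ℓ, D, hD⟩ := exists_isDimFiltration R M
    refine ⟨ℓ, D, hD, fun i ↦ ?_⟩
    obtain ⟨n, h1, h2⟩ := key hD i
    exact (isCMModule_iff_of_eq_dimLT h1 h2).mpr (h n)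

end Filtration

section Idealization

open TrivSqZeroExt

variable {R : Type*} [CommRing R] {M : Type*} [AddCommGroup M] [Module R M]
  [Module Rᵐᵒᵖ M] [IsCentralScalar R M]

local notation "A" => TrivSqZeroExt R M

lemma isNilpotent_sub_inl_fst (a : A) : IsNilpotent (a - inl a.fst) := by
  refine ⟨2, ?_⟩
  have : a - inl a.fst = inr a.snd := by ext <;> simp
  rw [this, pow_two, inr_mul_inr]

lemma mem_iff_inl_fst_mem (p : Ideal A) [p.IsPrime] (a : A) : a ∈ p ↔ inl a.fst ∈ p := by
  have h : a - inl a.fst ∈ p := by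
    obtain ⟨k, hk⟩ := isNilpotent_sub_inl_fst a
    exact Ideal.IsPrime.mem_of_pow_mem ‹_› k (hk ▸ p.zero_mem)
  exact ⟨fun ha ↦ by simpa using p.sub_mem ha h, fun ha ↦ by simpa using p.add_mem h ha⟩

/-- The prime spectrum of an idealization is that of the base ring. -/
def primeSpectrumOrderIso : PrimeSpectrum A ≃o PrimeSpectrum R where
  toFun p := p.comap (inlHom R M)
  invFun p := p.comap (fstHom R R M).toRingHom
  left_inv p := by
    ext a
    exact (mem_iff_inl_fst_mem p.asIdeal a).symm
  right_inv p := by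
    ext r
    simp
  map_rel_iff' {p q} := by
    refine ⟨fun h a ha ↦ ?_, fun h a ha ↦ h ha⟩
    rw [mem_iff_inl_fst_mem] at ha ⊢
    exact h ha

lemma mem_dimLT_idealization_iff {N : Type*} [AddCommGroup N] [Module A N] [Module R N]
    [IsScalarTower R A N] {n : ℕ} {x : N} : x ∈ dimLT A N n ↔ x ∈ dimLT R N n := by
  rw [mem_dimLT, mem_dimLT, ← (primeSpectrumOrderIso (R := R) (M := M)).forall_congr_right]
  refine forall_congr' fun p ↦ ?_
  rw [show Order.coheight (primeSpectrumOrderIso.toEquiv p) = Order.coheight p from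
    Order.coheight_orderIso primeSpectrumOrderIso p]
  refine imp_congr_left ⟨fun h r hr ↦ ?_, fun h a ha ↦ ?_⟩
  · refine h (inl r) ?_
    rwa [← algebraMap_eq_inl, algebraMap_smul]
  · have hsq : (a.fst ^ 2 : R) • x = 0 := by
      have : algebraMap R A (a.fst ^ 2) = (inl a.fst - inr a.snd) * a := by
        ext
        · simp [algebraMap_eq_inl, pow_two]
        · simp [algebraMap_eq_inl]
      rw [← algebraMap_smul A, this, mul_smul, ha, smul_zero]
    rw [mem_iff_inl_fst_mem]
    have hmem : inl (a.fst ^ 2) ∈ p.asIdeal := h _ hsq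
    exact p.isPrime.mem_of_pow_mem 2 (inl_pow (M := M) a.fst 2 ▸ hmem)

omit [Module Rᵐᵒᵖ M] [IsCentralScalar R M] in
lemma mem_dimLT_prod_iff {N : Type*} [AddCommGroup N] [Module R N] {n : ℕ} {x : M × N} :
    x ∈ dimLT R (M × N) n ↔ x.1 ∈ dimLT R M n ∧ x.2 ∈ dimLT R N n := by
  refine ⟨fun h ↦ ⟨mem_dimLT_map (LinearMap.fst R M N) h, mem_dimLT_map (LinearMap.snd R M N) h⟩,
    fun h ↦ ?_⟩
  have h1 := mem_dimLT_map (LinearMap.inl R M N) h.1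
  have h2 := mem_dimLT_map (LinearMap.inr R M N) h.2
  simpa using add_mem h1 h2

/-- The graded pieces of the dimension filtration of an idealization. -/
noncomputable def dimQuotIdealizationEquiv (n : ℕ) :
    dimQuot A A n ≃ₗ[R] dimQuot R R n × dimQuot R M n := by
  have hmem (m : ℕ) (x : A) :
      x ∈ dimLT A A m ↔ x.fst ∈ dimLT R R m ∧ x.snd ∈ dimLT R M m := by
    have h : x ∈ dimLT A A m ↔ x ∈ dimLT R A m := mem_dimLT_idealization_iff
    exact h.trans (mem_dimLT_prod_iff (M := R) (N := M) (x := x))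
  let f : ↥(dimLT A A (n + 1)) →ₗ[R] dimQuot R R n × dimQuot R M n :=
    { toFun x := (Submodule.Quotient.mk ⟨x.1.fst, ((hmem _ _).mp x.2).1⟩,
        Submodule.Quotient.mk ⟨x.1.snd, ((hmem _ _).mp x.2).2⟩)
      map_add' _ _ := rfl
      map_smul' _ _ := rfl }
  have hf : Function.Surjective f := by
    rintro ⟨a, b⟩
    obtain ⟨a, rfl⟩ := Submodule.mkQ_surjective _ a
    obtain ⟨b, rfl⟩ := Submodule.mkQ_surjective _ b
    exact ⟨⟨(a.1, b.1), (hmem _ _).mpr ⟨a.2, b.2⟩⟩, rfl⟩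
  have hker : ((dimLT A A n).comap (dimLT A A (n + 1)).subtype).restrictScalars R =
      LinearMap.ker f := by
    ext x
    have : f x = 0 ↔ x.1.fst ∈ dimLT R R n ∧ x.1.snd ∈ dimLT R M n := by
      refine Prod.ext_iff.trans (and_congr ?_ ?_) <;> exact Submodule.Quotient.mk_eq_zero _
    rw [LinearMap.mem_ker, this]
    exact hmem n x
  exact (Submodule.Quotient.restrictScalarsEquiv R _).symm.trans
    ((Submodule.quotEquivOfEq _ _ hker).trans (f.quotKerEquivOfSurjective hf))

end Idealization

/-- The idealization `R ⋉ M` is a sequentially Cohen-Macaulay local ring iff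
`R` is a sequentially Cohen-Macaulay local ring and `M` is a sequentially Cohen-Macaulay
`R`-module. -/
theorem stmt11 (R : Type*) [CommRing R] [IsNoetherianRing R] [IsLocalRing R]
    (M : Type*) [AddCommGroup M] [Module R M] [Module.Finite R M] [Nontrivial M]
    [Module Rᵐᵒᵖ M] [IsCentralScalar R M]
    [IsLocalRing (TrivSqZeroExt R M)] :
    IsSeqCMRing (TrivSqZeroExt R M) ↔ IsSeqCMRing R ∧ IsSeqCM R M := by
  have : Module.Finite R (TrivSqZeroExt R M) := inferInstanceAs (Module.Finite R (R × M))
  have : IsNoetherianRing (TrivSqZeroExt R M) := isNoetherian_of_tower R inferInstance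
  have hfst (a : TrivSqZeroExt R M) (r : R) (hr : a.fst = r) :
      a ∈ maximalIdeal (TrivSqZeroExt R M) ↔ r ∈ maximalIdeal R := by
    rw [mem_maximalIdeal, mem_maximalIdeal, mem_nonunits_iff, mem_nonunits_iff,
      TrivSqZeroExt.isUnit_iff_isUnit_fst, hr]
  rw [IsSeqCMRing, IsSeqCMRing, isSeqCM_iff, isSeqCM_iff, isSeqCM_iff, ← forall_and]
  refine forall_congr' fun n ↦ ?_
  rw [← depthGE_prod_iff, ← depthGE_congr (R := R) (dimQuotIdealizationEquiv (M := M) n)]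
  refine depthGE_iff_of_isScalarTower (fun r hr ↦ (hfst _ r rfl).mpr hr) fun a ha ↦
    ⟨a.fst, (hfst a _ rfl).mp ha, isNilpotent_sub_inl_fst a⟩
end
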